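/- Let 0 < 10r < ρ, let f be a (ρ/10r)-Lipschitz function on B_{N−1}(0,r) with f(0) = 0, and let U = U_f(r,ρ). Let a > 0 and V ∈ 𝒱(U,a). Let u be positive harmonic in U and let v be positive (Δ−V)-harmonic in U, and assume that u = v = 0 on ∂_#U = ∂U ∩ T(1). Then v(x)/v(A) ≤ c · u(x)/u(A) for all x ∈ U ∩ T(1/2), where A = (0,…,0,ρ/2) and c is a positive constant depending only on ρ/r, N and a. -/

import Mathlib

open MeasureTheory Metric Set Filter Topology
open scoped ENNReal NNReal

noncomputable section

namespace Anc

abbrev ES (N : ℕ) := EuclideanSpace ℝ (Fin N)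

/-- `δ_Ω(x)`: the distance from `x` to the complement of `Ω`. -/
def dista {N : ℕ} (Ω : Set (ES N)) (x : ES N) : ℝ := infDist x Ωᶜ

/-- Pointwise Laplacian (junk values where the derivatives do not exist). -/
def lap {N : ℕ} (u : ES N → ℝ) (x : ES N) : ℝ :=
  ∑ i : Fin N,
    fderiv ℝ (fun y => fderiv ℝ u y (EuclideanSpace.single i 1)) x (EuclideanSpace.single i 1)

/-- Smooth compactly supported test functions in `Ω`. -/
def IsTestFun {N : ℕ} (Ω : Set (ES N)) (φ : ES N → ℝ) : Prop :=
  ContDiff ℝ (⊤ : ℕ∞) φ ∧ IsCompact (tsupport φ) ∧ tsupport φ ⊆ Ω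

/-- `u` is a continuous weak solution of `Δu - V·u = 0` in `Ω` (i.e. `L_V`-harmonic). -/
def LVHarmonic {N : ℕ} (Ω : Set (ES N)) (V u : ES N → ℝ) : Prop :=
  ContinuousOn u Ω ∧ LocallyIntegrableOn u Ω ∧
    LocallyIntegrableOn (fun x => V x * u x) Ω ∧
    ∀ φ, IsTestFun Ω φ → ∫ x in Ω, u x * lap φ x = ∫ x in Ω, V x * u x * φ x

/-- `s` is `L_V`-superharmonic in `Ω` (weakly, `Δs - V·s ≤ 0`, `s` l.s.c.). -/
def LVSuperharmonic {N : ℕ} (Ω : Set (ES N)) (V s : ES N → ℝ) : Prop :=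
  LowerSemicontinuousOn s Ω ∧ LocallyIntegrableOn s Ω ∧
    LocallyIntegrableOn (fun x => V x * s x) Ω ∧
    ∀ φ, IsTestFun Ω φ → (∀ x, 0 ≤ φ x) →
      ∫ x in Ω, s x * lap φ x ≤ ∫ x in Ω, V x * s x * φ x

/-- The class `𝒱(Ω,a)` of nonnegative Borel potentials with `V(x) ≤ a/δ_Ω(x)²`. -/
def VClass {N : ℕ} (Ω : Set (ES N)) (a : ℝ) (V : ES N → ℝ) : Prop :=
  Measurable V ∧ ∀ x ∈ Ω, 0 ≤ V x ∧ V x * dista Ω x ^ 2 ≤ a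

/-- Lipschitz domain: open, connected, and near every boundary point, after an
orthogonal change of coordinates, the domain is the region above the graph of a
Lipschitz function. -/
def IsLipschitzDomain {N : ℕ} (Ω : Set (ES N)) : Prop :=
  IsOpen Ω ∧ IsConnected Ω ∧
    ∀ z ∈ frontier Ω, ∃ (g : ES N ≃ₗᵢ[ℝ] ES N) (i : Fin N) (f : ES N → ℝ)
      (L : ℝ≥0) (ε : ℝ), 0 < ε ∧ LipschitzWith L f ∧
      (∀ x w : ES N, (∀ j, j ≠ i → x j = w j) → f x = f w) ∧
      ∀ x ∈ ball z ε, (x ∈ Ω ↔ f (g x) < g x i)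

/-- `Ω` has a `C^{1,α}` boundary near `y`. -/
def IsC1AlphaNear {N : ℕ} (Ω : Set (ES N)) (α : ℝ) (y : ES N) : Prop :=
  ∃ (g : ES N ≃ₗᵢ[ℝ] ES N) (i : Fin N) (f : ES N → ℝ) (C : ℝ≥0) (ε : ℝ),
    0 < ε ∧ ContDiff ℝ 1 f ∧ HolderWith C α.toNNReal (fderiv ℝ f) ∧
    (∀ x w : ES N, (∀ j, j ≠ i → x j = w j) → f x = f w) ∧
    ∀ x ∈ ball y ε, (x ∈ Ω ↔ f (g x) < g x i)

/-- `K` is the `L_V`-Martin kernel of `Ω` with pole `y ∈ ∂Ω`, normalized at `x₀`: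
the unique positive `L_V`-harmonic function vanishing on `∂Ω ∖ {y}` with `K x₀ = 1`. -/
def IsMartinKernel {N : ℕ} (Ω : Set (ES N)) (V : ES N → ℝ) (x₀ y : ES N)
    (K : ES N → ℝ) : Prop :=
  LVHarmonic Ω V K ∧ (∀ x ∈ Ω, 0 < K x) ∧ K x₀ = 1 ∧
    ∀ z ∈ frontier Ω, z ≠ y → Tendsto K (𝓝[Ω] z) (𝓝 0)

/-- `G` is the `L_V`-Green function of `Ω` with pole `y ∈ Ω`:
positive, vanishing at the boundary, and `L_V G = -δ_y` weakly. -/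
def IsGreenFunction {N : ℕ} (Ω : Set (ES N)) (V : ES N → ℝ) (y : ES N)
    (G : ES N → ℝ) : Prop :=
  ContinuousOn G (Ω \ {y}) ∧ (∀ x ∈ Ω \ {y}, 0 < G x) ∧ LocallyIntegrableOn G Ω ∧
    (∀ z ∈ frontier Ω, Tendsto G (𝓝[Ω \ {y}] z) (𝓝 0)) ∧
    ∀ φ, IsTestFun Ω φ → ∫ x in Ω, G x * (lap φ x - V x * φ x) = -φ y

/-- `y ∈ ∂Ω` is finely regular w.r.t. `V`, `Ky` being the classical Martin kernel at
`y`: the greatest `L_V`-harmonic minorant of `Ky` is positive, equivalently `Ky`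
admits a positive `L_V`-harmonic minorant. -/
def FinelyRegular {N : ℕ} (Ω : Set (ES N)) (V Ky : ES N → ℝ) : Prop :=
  ∃ h, LVHarmonic Ω V h ∧ (∀ x ∈ Ω, 0 < h x) ∧ ∀ x ∈ Ω, h x ≤ Ky x

/-- `h` is the greatest nonnegative `L_V`-harmonic minorant of `w` in `Ω`. -/
def IsGreatestLVHarmMinorant {N : ℕ} (Ω : Set (ES N)) (V w h : ES N → ℝ) : Prop :=
  LVHarmonic Ω V h ∧ (∀ x ∈ Ω, 0 ≤ h x ∧ h x ≤ w x) ∧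
    ∀ g, LVHarmonic Ω V g → (∀ x ∈ Ω, 0 ≤ g x ∧ g x ≤ w x) → ∀ x ∈ Ω, g x ≤ h x

/-- Classical superharmonicity via the sub-mean value property. -/
def IsSuperharmonicOn {N : ℕ} (W : Set (ES N)) (s : ES N → ℝ) : Prop :=
  LowerSemicontinuousOn s W ∧ LocallyIntegrableOn s W ∧
    ∀ x ∈ W, ∀ t > (0:ℝ), closedBall x t ⊆ W → ⨍ z in ball x t, s z ≤ s x

/-- The réduite of `w` over `A` in `W`: infimum of the nonnegative superharmonic
functions in `W` dominating `w` on `A`. -/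
def reduite {N : ℕ} (W : Set (ES N)) (w : ES N → ℝ) (A : Set (ES N)) (x : ES N) : ℝ :=
  sInf {v | ∃ s : ES N → ℝ, IsSuperharmonicOn W s ∧ (∀ z ∈ W, 0 ≤ s z) ∧
    (∀ z ∈ A, w z ≤ s z) ∧ v = s x}

/-- The lower semicontinuous regularization `R̂` of the réduite. -/
def reduiteReg {N : ℕ} (W : Set (ES N)) (w : ES N → ℝ) (A : Set (ES N)) (x : ES N) : ℝ :=
  liminf (reduite W w A) (𝓝[W] x)

/-- Nontangential approach region at `y` with aperture `κ`. -/
def ntRegion {N : ℕ} (Ω : Set (ES N)) (y : ES N) (κ : ℝ) : Set (ES N) :=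
  {x | x ∈ Ω ∧ dist x y ≤ κ * dista Ω x}

/-- `g` tends to `l` nontangentially at `y`. -/
def TendstoNT {N : ℕ} (Ω : Set (ES N)) (g : ES N → ℝ) (y : ES N) (l : Filter ℝ) : Prop :=
  ∀ κ > (0:ℝ), Tendsto g (𝓝[ntRegion Ω y κ] y) l

/-- Truncated cone `{y + t(ν+v) : 0 < t ≤ η, ‖v‖ ≤ η}` with vertex `y`. -/
def truncCone {N : ℕ} (y ν : ES N) (η : ℝ) : Set (ES N) :=
  {x | ∃ (t : ℝ) (v : ES N), 0 < t ∧ t ≤ η ∧ ‖v‖ ≤ η ∧ x = y + t • (ν + v)}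

/-- Last coordinate of a point of `ℝ^{n+1}`. -/
def lastC {n : ℕ} (x : ES (n + 1)) : ℝ := x (Fin.last n)

/-- First `n` coordinates of a point of `ℝ^{n+1}`. -/
def firstC {n : ℕ} (x : ES (n + 1)) : ES n :=
  (EuclideanSpace.equiv (Fin n) ℝ).symm fun i => x i.castSucc

/-- The region `U_f(r,ρ) = {(x',x_N) : |x'| < r, f(x') < x_N < ρ}`. -/
def Ucyl {n : ℕ} (f : ES n → ℝ) (r ρ : ℝ) : Set (ES (n + 1)) :=
  {x | ‖firstC x‖ < r ∧ f (firstC x) < lastC x ∧ lastC x < ρ}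

/-- The cylinder `T(t) = B_{N-1}(0,tr) × (-tρ, tρ)`. -/
def Tcyl (n : ℕ) (r ρ t : ℝ) : Set (ES (n + 1)) :=
  {x | ‖firstC x‖ < t * r ∧ |lastC x| < t * ρ}

/-- The graph part `∂_#U` of the boundary of `U_f(r,ρ)`. -/
def graphBdry {n : ℕ} (f : ES n → ℝ) (r ρ : ℝ) : Set (ES (n + 1)) :=
  frontier (Ucyl f r ρ) ∩ {x | ‖firstC x‖ < r ∧ lastC x = f (firstC x)}

/-!
For a suitable smooth radial kernel, the derivative of a weighted mean with respect to the radius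
is, up to a positive factor, the integral of the function against the Laplacian of a bump. Since `V`
is bounded by a multiple of `T ^ (-2)` on balls at distance of order `T` from the boundary, this
yields a Harnack inequality with constant depending only on `N` and `a`, and a maximum principle for
subharmonic functions. Both `v` and `-u` are subharmonic and vanish on the graph, near which they
decay by comparison with a Gaussian barrier in an exterior ball.

Balancing this decay against the polynomial growth allowed by Harnack chains bounds `v / v(A)` by a
constant `K` near the graph (Carleson's estimate). On a box of size `s` standing on the graph, and
for `c` large, the subharmonic function `q = v / v(A) - c * u / u(A)` is then at most `K`, and it is
very negative above a thin layer of height `δ * s`. In this layer the decay near the graph improves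
the upper bound, while the mean value inequality carries the negative values slightly further down;
so the same pair of bounds holds on a slightly smaller box with a smaller `K`. Iterating down to the
height of a given point leaves that point above the layer, whence `q ≤ 0` there.
-/

/-! ### Radial kernels -/

section Profile

/-- The radial profile `s ↦ exp (-1 / (1 - s))` for `s < 1`, extended by `0`, of the bump functions
used as test functions. -/
def bumpProfile (s : ℝ) : ℝ := expNegInvGlue (1 - s)

/-- The profile `-bumpProfile'` of the averaging kernels; the averages taken with it have a radial
derivative governed by the Laplacian of a bump, see `hasDerivAt_avgKernel`. -/
def kernelProfile (s : ℝ) : ℝ := ((1 - s)⁻¹) ^ 2 * expNegInvGlue (1 - s)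

lemma hasDerivAt_bumpProfile (s : ℝ) : HasDerivAt bumpProfile (-kernelProfile s) s := by
  have hglue := expNegInvGlue.hasDerivAt_polynomial_eval_inv_mul 1 (1 - s)
  simp only [Polynomial.eval_one, one_mul, Polynomial.derivative_one, sub_zero, mul_one,
    Polynomial.eval_pow, Polynomial.eval_X] at hglue
  have hsub : HasDerivAt (fun s : ℝ => 1 - s) (-1) s := by
    simpa using (hasDerivAt_id s).const_sub 1
  exact (hglue.comp s hsub).congr_deriv (by rw [kernelProfile, mul_neg_one])

lemma contDiff_bumpProfile {m : ℕ∞} : ContDiff ℝ m bumpProfile :=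
  expNegInvGlue.contDiff.comp (contDiff_const.sub contDiff_id)

lemma contDiff_kernelProfile {m : ℕ∞} : ContDiff ℝ m kernelProfile := by
  have heq : kernelProfile = (fun x ↦ Polynomial.eval x⁻¹ (Polynomial.X ^ 2) * expNegInvGlue x) ∘
      fun s : ℝ => 1 - s := by
    funext s
    simp [kernelProfile]
  rw [heq]
  exact (expNegInvGlue.contDiff_polynomial_eval_inv_mul _).comp (contDiff_const.sub contDiff_id)

lemma continuous_kernelProfile : Continuous kernelProfile :=
  (contDiff_kernelProfile (m := 0)).continuous

lemma hasDerivAt_kernelProfile (s : ℝ) : HasDerivAt kernelProfile (deriv kernelProfile s) s :=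
  ((contDiff_kernelProfile (m := 1)).differentiable (by simp) s).hasDerivAt

lemma continuous_deriv_kernelProfile : Continuous (deriv kernelProfile) :=
  (contDiff_kernelProfile (m := 1)).continuous_deriv (by simp)

lemma antitone_bumpProfile : Antitone bumpProfile :=
  fun _ _ hst => expNegInvGlue.monotone (by linarith)

lemma bumpProfile_nonneg (s : ℝ) : 0 ≤ bumpProfile s := expNegInvGlue.nonneg _

lemma bumpProfile_pos {s : ℝ} (hs : s < 1) : 0 < bumpProfile s :=
  expNegInvGlue.pos_of_pos (by linarith)

lemma bumpProfile_eq_zero {s : ℝ} (hs : 1 ≤ s) : bumpProfile s = 0 :=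
  expNegInvGlue.zero_of_nonpos (by linarith)

lemma kernelProfile_nonneg (s : ℝ) : 0 ≤ kernelProfile s :=
  mul_nonneg (sq_nonneg _) (expNegInvGlue.nonneg _)

lemma kernelProfile_eq_zero {s : ℝ} (hs : 1 ≤ s) : kernelProfile s = 0 := by
  rw [kernelProfile, expNegInvGlue.zero_of_nonpos (by linarith), mul_zero]

lemma bumpProfile_le_kernelProfile {s : ℝ} (hs : 0 ≤ s) : bumpProfile s ≤ kernelProfile s := by
  rcases le_or_gt 1 s with h1s | hs1
  · rw [bumpProfile_eq_zero h1s, kernelProfile_eq_zero h1s]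
  · have hinv : (1 : ℝ) ≤ (1 - s)⁻¹ := (one_le_inv₀ (by linarith)).2 (by linarith)
    exact le_mul_of_one_le_left (expNegInvGlue.nonneg _) (one_le_pow₀ hinv)

lemma exists_kernelProfile_le : ∃ B : ℝ, 0 < B ∧ ∀ s, 0 ≤ s → kernelProfile s ≤ B := by
  obtain ⟨C, hC⟩ := (isCompact_Icc (a := (0 : ℝ)) (b := 1)).exists_bound_of_continuousOn
    continuous_kernelProfile.continuousOn
  refine ⟨max C 1, by positivity, fun s hs => ?_⟩
  rcases le_or_gt s 1 with hs1 | h1s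
  · exact (le_abs_self _).trans ((hC s ⟨hs, hs1⟩).trans (le_max_left _ _))
  · rw [kernelProfile_eq_zero h1s.le]
    positivity

end Profile

section Laplacian

variable {N : ℕ}

lemma lap_eq_zero_of_notMem_tsupport {φ : ES N → ℝ} {z : ES N} (hz : z ∉ tsupport φ) :
    lap φ z = 0 := by
  refine Finset.sum_eq_zero fun i _ => ?_
  have hfderiv : (fun y => fderiv ℝ φ y (EuclideanSpace.single i 1)) =ᶠ[𝓝 z] fun _ => 0 := by
    filter_upwards [(notMem_tsupport_iff_eventuallyEq.1 hz).fderiv (𝕜 := ℝ)] with y hy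
    simp [hy]
  simp [hfderiv.fderiv_eq]

lemma tsupport_lap_subset (φ : ES N → ℝ) : tsupport (lap φ) ⊆ tsupport φ :=
  closure_minimal (fun _ hz => not_imp_comm.1 lap_eq_zero_of_notMem_tsupport hz)
    (isClosed_tsupport _)

lemma contDiff_fderiv_apply {φ : ES N → ℝ} (hφ : ContDiff ℝ (⊤ : ℕ∞) φ) (v : ES N) :
    ContDiff ℝ (⊤ : ℕ∞) (fun y => fderiv ℝ φ y v) :=
  (hφ.fderiv_right (m := (⊤ : ℕ∞)) (by simp)).clm_apply contDiff_const

lemma continuous_lap {φ : ES N → ℝ} (hφ : ContDiff ℝ (⊤ : ℕ∞) φ) : Continuous (lap φ) :=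
  continuous_finsetSum _ fun _ _ =>
    (contDiff_fderiv_apply (contDiff_fderiv_apply hφ _) _).continuous

lemma integral_mul_fderiv_apply_eq_neg {g φ : ES N → ℝ} (hg : ContDiff ℝ (⊤ : ℕ∞) g)
    (hφ : ContDiff ℝ (⊤ : ℕ∞) φ) (hc : HasCompactSupport φ) (v : ES N) :
    ∫ z, g z * fderiv ℝ φ z v = -∫ z, fderiv ℝ g z v * φ z :=
  integral_mul_fderiv_eq_neg_fderiv_mul_of_integrable
    (((contDiff_fderiv_apply hg v).continuous.mul
      hφ.continuous).integrable_of_hasCompactSupport hc.mul_left)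
    ((hg.continuous.mul (contDiff_fderiv_apply hφ v).continuous).integrable_of_hasCompactSupport
      (hc.fderiv_apply ℝ v).mul_left)
    ((hg.continuous.mul hφ.continuous).integrable_of_hasCompactSupport hc.mul_left)
    (fun z _ => hg.differentiable (by simp) z) (fun z _ => hφ.differentiable (by simp) z)

lemma integral_mul_lap {g φ : ES N → ℝ} (hg : ContDiff ℝ (⊤ : ℕ∞) g)
    (hφ : ContDiff ℝ (⊤ : ℕ∞) φ) (hc : HasCompactSupport φ) :
    ∫ z, g z * lap φ z = ∫ z, lap g z * φ z := by
  simp only [lap, Finset.mul_sum, Finset.sum_mul]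
  rw [integral_finsetSum, integral_finsetSum]
  · refine Finset.sum_congr rfl fun i _ => ?_
    rw [integral_mul_fderiv_apply_eq_neg hg (contDiff_fderiv_apply hφ _) (hc.fderiv_apply ℝ _),
      integral_mul_fderiv_apply_eq_neg (contDiff_fderiv_apply hg _) hφ hc, neg_neg]
  · exact fun i _ => ((contDiff_fderiv_apply (contDiff_fderiv_apply hg _) _).continuous.mul
      hφ.continuous).integrable_of_hasCompactSupport hc.mul_left
  · exact fun i _ => (hg.continuous.mul (contDiff_fderiv_apply (contDiff_fderiv_apply hφ _)
      _).continuous).integrable_of_hasCompactSupport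
        ((hc.fderiv_apply ℝ _).fderiv_apply ℝ _).mul_left

lemma hasFDerivAt_comp_norm_sub_sq {G : ℝ → ℝ} {G' : ℝ} {x z : ES N}
    (hG : HasDerivAt G G' (‖z - x‖ ^ 2)) :
    HasFDerivAt (fun z => G (‖z - x‖ ^ 2)) (G' • ((2 : ℝ) • innerSL ℝ (z - x))) z := by
  have hnorm : HasFDerivAt (fun z : ES N => ‖z - x‖ ^ 2) ((2 : ℝ) • innerSL ℝ (z - x)) z :=
    ((hasFDerivAt_id z).sub_const x).norm_sq.congr_fderiv (by ext; simp)
  exact hG.comp_hasFDerivAt z hnorm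

lemma fderiv_fderiv_comp_norm_sub_sq_single {G G₁ G₂ : ℝ → ℝ} (hG : ∀ s, HasDerivAt G (G₁ s) s)
    (hG₁ : ∀ s, HasDerivAt G₁ (G₂ s) s) (x z : ES N) (i : Fin N) :
    fderiv ℝ (fun y => fderiv ℝ (fun z => G (‖z - x‖ ^ 2)) y (EuclideanSpace.single i 1)) z
        (EuclideanSpace.single i 1)
      = 4 * (z - x) i ^ 2 * G₂ (‖z - x‖ ^ 2) + 2 * G₁ (‖z - x‖ ^ 2) := by
  have inner_single (w : ES N) : inner ℝ w (EuclideanSpace.single i (1 : ℝ)) = w i := by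
    simp [EuclideanSpace.inner_single_right]
  have hfst : (fun y => fderiv ℝ (fun z => G (‖z - x‖ ^ 2)) y (EuclideanSpace.single i 1))
      = fun y => G₁ (‖y - x‖ ^ 2) * (2 * (y - x) i) := by
    funext y
    simp only [(hasFDerivAt_comp_norm_sub_sq (hG _)).fderiv, _root_.smul_apply,
      innerSL_apply_apply, inner_single, smul_eq_mul]
  have hcoord : HasFDerivAt (fun y : ES N => 2 * (y - x) i)
      ((2 : ℝ) • (EuclideanSpace.proj i : ES N →L[ℝ] ℝ)) z :=
    ((EuclideanSpace.proj i : ES N →L[ℝ] ℝ).hasFDerivAt.comp z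
      ((hasFDerivAt_id z).sub_const x)).const_mul 2
  have hsnd : HasFDerivAt (fun y => G₁ (‖y - x‖ ^ 2) * (2 * (y - x) i)) _ z :=
    (hasFDerivAt_comp_norm_sub_sq (hG₁ _)).mul hcoord
  have hproj : (EuclideanSpace.proj i : ES N →L[ℝ] ℝ) (EuclideanSpace.single i (1 : ℝ)) = 1 := by
    simp
  rw [hfst, hsnd.fderiv]
  simp only [_root_.add_apply, _root_.smul_apply, innerSL_apply_apply, inner_single, smul_eq_mul,
    hproj]
  ring

lemma lap_comp_norm_sub_sq {G G₁ G₂ : ℝ → ℝ} (hG : ∀ s, HasDerivAt G (G₁ s) s)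
    (hG₁ : ∀ s, HasDerivAt G₁ (G₂ s) s) (x z : ES N) :
    lap (fun z => G (‖z - x‖ ^ 2)) z
      = 4 * ‖z - x‖ ^ 2 * G₂ (‖z - x‖ ^ 2) + 2 * N * G₁ (‖z - x‖ ^ 2) := by
  simp only [lap, fderiv_fderiv_comp_norm_sub_sq_single hG hG₁, Finset.sum_add_distrib,
    ← Finset.sum_mul, ← Finset.mul_sum, ← EuclideanSpace.real_norm_sq_eq, Finset.sum_const,
    Finset.card_univ, Fintype.card_fin, nsmul_eq_mul]
  ring

lemma tsupport_subset_closedBall {φ : ES N → ℝ} {x : ES N} {t : ℝ}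
    (hφ : ∀ z, t ≤ ‖z - x‖ → φ z = 0) : tsupport φ ⊆ closedBall x t := by
  refine closure_minimal (fun z hz => ?_) isClosed_closedBall
  rw [mem_closedBall, dist_eq_norm]
  by_contra! htz
  exact hz (hφ z htz.le)

end Laplacian

section Kernel

variable {N : ℕ} {x z : ES N} {t : ℝ}

/-- The smooth radial bump supported in the closed ball of centre `x` and radius `t`. -/
def bump (x : ES N) (t : ℝ) (z : ES N) : ℝ := bumpProfile (‖z - x‖ ^ 2 / t ^ 2)

/-- The averaging kernel of centre `x` and scale `t`. It is not normalized: its total mass is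
`kernelMass N`. -/
def avgKernel (x : ES N) (t : ℝ) (z : ES N) : ℝ :=
  (t ^ N)⁻¹ * kernelProfile (‖z - x‖ ^ 2 / t ^ 2)

/-- The total mass of `avgKernel`, which depends neither on the centre nor on the scale. -/
def kernelMass (N : ℕ) : ℝ := ∫ z : ES N, avgKernel 0 1 z

lemma one_le_norm_sub_sq_div (ht : 0 < t) (hz : t ≤ ‖z - x‖) : 1 ≤ ‖z - x‖ ^ 2 / t ^ 2 := by
  rw [← div_pow]
  exact one_le_pow₀ ((one_le_div ht).2 hz)

lemma bump_nonneg (x : ES N) (t : ℝ) (z : ES N) : 0 ≤ bump x t z := bumpProfile_nonneg _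

lemma bump_eq_zero (ht : 0 < t) (hz : t ≤ ‖z - x‖) : bump x t z = 0 :=
  bumpProfile_eq_zero (one_le_norm_sub_sq_div ht hz)

lemma contDiff_bump (x : ES N) (t : ℝ) : ContDiff ℝ (⊤ : ℕ∞) (bump x t) :=
  contDiff_bumpProfile.comp (((contDiff_id.sub contDiff_const).norm_sq ℝ).div_const _)

lemma tsupport_bump_subset (x : ES N) (ht : 0 < t) : tsupport (bump x t) ⊆ closedBall x t :=
  tsupport_subset_closedBall fun _ => bump_eq_zero ht

lemma isTestFun_bump (x : ES N) {R : ℝ} (ht : 0 < t) (htR : t < R) :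
    IsTestFun (ball x R) (bump x t) :=
  ⟨contDiff_bump x t, (isCompact_closedBall x t).of_isClosed_subset (isClosed_tsupport _)
    (tsupport_bump_subset x ht), (tsupport_bump_subset x ht).trans (closedBall_subset_ball htR)⟩

lemma integral_bump_pos (x : ES N) (ht : 0 < t) : 0 < ∫ z, bump x t z := by
  refine (contDiff_bump x t).continuous.integral_pos_of_hasCompactSupport_nonneg_nonzero
    (isTestFun_bump x ht (lt_add_one t)).2.1 (bump_nonneg x t) (x := x) (ne_of_gt ?_)
  exact bumpProfile_pos (by simp)

lemma lap_bump (x : ES N) (t : ℝ) (z : ES N) :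
    lap (bump x t) z = (t ^ 2)⁻¹ *
      (-4 * (‖z - x‖ ^ 2 / t ^ 2) * deriv kernelProfile (‖z - x‖ ^ 2 / t ^ 2)
        - 2 * N * kernelProfile (‖z - x‖ ^ 2 / t ^ 2)) := by
  have hscale (s : ℝ) : HasDerivAt (fun s => s / t ^ 2) ((t ^ 2)⁻¹) s := by
    simpa using (hasDerivAt_id s).div_const (t ^ 2)
  have hfst (s : ℝ) : HasDerivAt (fun s => bumpProfile (s / t ^ 2))
      (-kernelProfile (s / t ^ 2) * (t ^ 2)⁻¹) s :=
    (hasDerivAt_bumpProfile _).comp s (hscale s)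
  have hsnd (s : ℝ) : HasDerivAt (fun s => -kernelProfile (s / t ^ 2) * (t ^ 2)⁻¹)
      (-(deriv kernelProfile (s / t ^ 2) * (t ^ 2)⁻¹) * (t ^ 2)⁻¹) s :=
    ((hasDerivAt_kernelProfile _).comp s (hscale s)).neg.mul_const _
  unfold bump
  rw [lap_comp_norm_sub_sq hfst hsnd x z]
  ring

lemma lap_bump_eq_zero (ht : 0 < t) (hz : z ∉ closedBall x t) : lap (bump x t) z = 0 :=
  lap_eq_zero_of_notMem_tsupport fun h => hz (tsupport_bump_subset x ht h)

lemma hasDerivAt_avgKernel (x z : ES N) (ht : 0 < t) :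
    HasDerivAt (fun t => avgKernel x t z) (1 / 2 * t * (t ^ N)⁻¹ * lap (bump x t) z) t := by
  have ht0 : t ≠ 0 := ht.ne'
  have hpow : HasDerivAt (fun t : ℝ => (t ^ N)⁻¹) (-(N : ℝ) * (t ^ N)⁻¹ * t⁻¹) t := by
    refine ((hasDerivAt_pow N t).inv (pow_ne_zero N ht0)).congr_deriv ?_
    rcases N with _ | m
    · simp
    · simp only [Nat.cast_add, Nat.cast_one, add_tsub_cancel_right]
      field_simp
      ring
  have hratio : HasDerivAt (fun t : ℝ => ‖z - x‖ ^ 2 / t ^ 2)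
      (-2 * (‖z - x‖ ^ 2 / t ^ 2) * t⁻¹) t := by
    refine (((hasDerivAt_pow 2 t).inv (pow_ne_zero 2 ht0)).const_mul (‖z - x‖ ^ 2)).congr_deriv ?_
    simp only [Nat.cast_ofNat, Nat.add_one_sub_one, pow_one]
    field_simp
  refine (hpow.mul ((hasDerivAt_kernelProfile _).comp t hratio)).congr_deriv ?_
  simp only [lap_bump, Function.comp_def]
  field_simp
  ring

lemma avgKernel_nonneg (x : ES N) (ht : 0 ≤ t) (z : ES N) : 0 ≤ avgKernel x t z :=
  mul_nonneg (by positivity) (kernelProfile_nonneg _)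

lemma avgKernel_eq_zero (ht : 0 < t) (hz : t ≤ ‖z - x‖) : avgKernel x t z = 0 := by
  rw [avgKernel, kernelProfile_eq_zero (one_le_norm_sub_sq_div ht hz), mul_zero]

lemma continuous_avgKernel (x : ES N) (t : ℝ) : Continuous (avgKernel x t) :=
  continuous_const.mul (continuous_kernelProfile.comp (by fun_prop))

lemma tsupport_avgKernel_subset (x : ES N) (ht : 0 < t) :
    tsupport (avgKernel x t) ⊆ closedBall x t :=
  tsupport_subset_closedBall fun _ => avgKernel_eq_zero ht

lemma hasCompactSupport_avgKernel (x : ES N) (ht : 0 < t) : HasCompactSupport (avgKernel x t) :=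
  (isCompact_closedBall x t).of_isClosed_subset (isClosed_tsupport _)
    (tsupport_avgKernel_subset x ht)

lemma integrable_avgKernel (x : ES N) (ht : 0 < t) : Integrable (avgKernel x t) :=
  (continuous_avgKernel x t).integrable_of_hasCompactSupport (hasCompactSupport_avgKernel x ht)

lemma bump_le_avgKernel (x : ES N) (ht : 0 ≤ t) (z : ES N) :
    (t ^ N)⁻¹ * bump x t z ≤ avgKernel x t z :=
  mul_le_mul_of_nonneg_left (bumpProfile_le_kernelProfile (by positivity)) (by positivity)

lemma integral_avgKernel (x : ES N) (ht : 0 < t) : ∫ z, avgKernel x t z = kernelMass N := by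
  have hscale (z : ES N) : avgKernel x t z = (t ^ N)⁻¹ * avgKernel 0 1 (t⁻¹ • (z - x)) := by
    simp [avgKernel, norm_smul, mul_pow, div_eq_inv_mul]
  simp_rw [hscale]
  rw [integral_const_mul,
    integral_sub_right_eq_self (fun z => avgKernel (0 : ES N) 1 (t⁻¹ • z)),
    Measure.integral_comp_inv_smul_of_nonneg _ _ ht.le, finrank_euclideanSpace_fin, smul_eq_mul,
    inv_mul_cancel_left₀ (by positivity), kernelMass]

lemma kernelMass_pos (N : ℕ) : 0 < kernelMass N := by
  refine (continuous_avgKernel 0 1).integral_pos_of_hasCompactSupport_nonneg_nonzero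
    (hasCompactSupport_avgKernel 0 one_pos) (avgKernel_nonneg 0 zero_le_one) (x := 0) ?_
  have hpos : 0 < kernelProfile 0 :=
    (bumpProfile_pos one_pos).trans_le (bumpProfile_le_kernelProfile le_rfl)
  simp [avgKernel, hpos.ne']

lemma bumpProfile_le_avgKernel (ht : 0 < t) (hz : z ∈ ball x (3 / 4 * t)) :
    bumpProfile (9 / 16) * (t ^ N)⁻¹ ≤ avgKernel x t z := by
  rw [mem_ball, dist_eq_norm] at hz
  rw [avgKernel, mul_comm]
  refine mul_le_mul_of_nonneg_left ((antitone_bumpProfile ?_).trans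
    (bumpProfile_le_kernelProfile (by positivity))) (by positivity)
  rw [div_le_iff₀ (by positivity)]
  nlinarith [pow_le_pow_left₀ (norm_nonneg _) hz.le 2]

end Kernel

/-! ### Weighted means -/

section WeightedMean

variable {N : ℕ} {g : ES N → ℝ} {D : Set (ES N)} {x : ES N} {R t c : ℝ}

/-- The mean of `g` around `x` at scale `t`, up to the factor `kernelMass N`. -/
def weightedMean (g : ES N → ℝ) (x : ES N) (t : ℝ) : ℝ := ∫ z, g z * avgKernel x t z

/-- `Δ g ≥ c` in `D`, in the sense of distributions; for `c = 0`, `g` is subharmonic. -/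
def WeakLapGE (D : Set (ES N)) (c : ℝ) (g : ES N → ℝ) : Prop :=
  ∀ φ, IsTestFun D φ → (∀ z, 0 ≤ φ z) → c * ∫ z, φ z ≤ ∫ z, g z * lap φ z

lemma integrable_mul_of_tsupport_subset {χ : ES N → ℝ} (hD : IsOpen D) (hg : ContinuousOn g D)
    (hχ : Continuous χ) (hc : HasCompactSupport χ) (hχD : tsupport χ ⊆ D) :
    Integrable (fun z => g z * χ z) := by
  have hcont : Continuous (fun z => g z * χ z) := continuous_of_tsupport fun z hz =>
    (hg.continuousAt (hD.mem_nhds (hχD (closure_mono (fun _ => right_ne_zero_of_mul) hz)))).mul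
      hχ.continuousAt
  exact hcont.integrable_of_hasCompactSupport hc.mul_left

lemma integrable_mul_testFun {φ : ES N → ℝ} (hD : IsOpen D) (hg : ContinuousOn g D)
    (hφ : IsTestFun D φ) : Integrable (fun z => g z * φ z) :=
  integrable_mul_of_tsupport_subset hD hg hφ.1.continuous hφ.2.1 hφ.2.2

lemma integrable_mul_lap {φ : ES N → ℝ} (hD : IsOpen D) (hg : ContinuousOn g D)
    (hφ : IsTestFun D φ) : Integrable (fun z => g z * lap φ z) :=
  integrable_mul_of_tsupport_subset hD hg (continuous_lap hφ.1)
    (hφ.2.1.of_isClosed_subset (isClosed_tsupport _) (tsupport_lap_subset φ))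
    ((tsupport_lap_subset φ).trans hφ.2.2)

lemma integrable_mul_avgKernel (hg : ContinuousOn g (ball x R)) (ht : 0 < t) (htR : t < R) :
    Integrable (fun z => g z * avgKernel x t z) :=
  integrable_mul_of_tsupport_subset isOpen_ball hg (continuous_avgKernel x t)
    (hasCompactSupport_avgKernel x ht)
    ((tsupport_avgKernel_subset x ht).trans (closedBall_subset_ball htR))

lemma exists_abs_deriv_avgKernel_le (x : ES N) {t₀ t₁ : ℝ} (ht₀ : 0 < t₀) :
    ∃ C, ∀ τ ∈ Icc t₀ t₁, ∀ z ∈ closedBall x t₁,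
      |1 / 2 * τ * (τ ^ N)⁻¹ * lap (bump x τ) z| ≤ C := by
  have hne : ∀ p ∈ Icc t₀ t₁ ×ˢ closedBall x t₁, p.1 ≠ 0 :=
    fun p hp => (ht₀.trans_le hp.1.1).ne'
  have hratio : ContinuousOn (fun p : ℝ × ES N => ‖p.2 - x‖ ^ 2 / p.1 ^ 2)
      (Icc t₀ t₁ ×ˢ closedBall x t₁) :=
    ContinuousOn.div (by fun_prop) (by fun_prop) fun p hp => pow_ne_zero 2 (hne p hp)
  have hinv (m : ℕ) : ContinuousOn (fun p : ℝ × ES N => (p.1 ^ m)⁻¹)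
      (Icc t₀ t₁ ×ˢ closedBall x t₁) :=
    ContinuousOn.inv₀ (by fun_prop) fun p hp => pow_ne_zero m (hne p hp)
  have hcont : ContinuousOn
      (fun p : ℝ × ES N => 1 / 2 * p.1 * (p.1 ^ N)⁻¹ * lap (bump x p.1) p.2)
      (Icc t₀ t₁ ×ˢ closedBall x t₁) := by
    simp only [lap_bump]
    exact (ContinuousOn.mul (by fun_prop) (hinv N)).mul ((hinv 2).mul
      (((continuousOn_const.mul hratio).mul
        (continuous_deriv_kernelProfile.comp_continuousOn hratio)).sub
        (continuousOn_const.mul (continuous_kernelProfile.comp_continuousOn hratio))))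
  obtain ⟨C, hC⟩ :=
    (isCompact_Icc.prod (isCompact_closedBall x t₁)).exists_bound_of_continuousOn hcont
  exact ⟨C, fun τ hτ z hz => hC (τ, z) ⟨hτ, hz⟩⟩

/-- Radial differentiation of a mean brings out the Laplacian: this is what turns differential
inequalities into mean value inequalities. -/
lemma hasDerivAt_weightedMean (hg : ContinuousOn g (ball x R)) (ht : 0 < t) (htR : t < R) :
    HasDerivAt (weightedMean g x) (1 / 2 * t * (t ^ N)⁻¹ * ∫ z, g z * lap (bump x t) z) t := by
  obtain ⟨t₁, htt₁, ht₁R⟩ := exists_between htR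
  obtain ⟨C, hC⟩ := exists_abs_deriv_avgKernel_le x (t₁ := t₁) (half_pos ht)
  have hnhds : Ioo (t / 2) t₁ ∈ 𝓝 t := Ioo_mem_nhds (by linarith) htt₁
  have hpos : ∀ τ ∈ Ioo (t / 2) t₁, 0 < τ := fun τ hτ => (half_pos ht).trans hτ.1
  have hderiv (z : ES N) : 1 / 2 * t * (t ^ N)⁻¹ * (g z * lap (bump x t) z)
      = g z * (1 / 2 * t * (t ^ N)⁻¹ * lap (bump x t) z) := by ring
  simp_rw [← integral_const_mul, hderiv]
  refine (hasDerivAt_integral_of_dominated_loc_of_deriv_le (μ := volume)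
    (F := fun τ z => g z * avgKernel x τ z)
    (F' := fun τ z => g z * (1 / 2 * τ * (τ ^ N)⁻¹ * lap (bump x τ) z))
    (bound := indicator (closedBall x t₁) fun z => |g z| * C) hnhds ?_
    (integrable_mul_avgKernel hg ht htR) ?_ (.of_forall fun z τ hτ => ?_) ?_
    (.of_forall fun z τ hτ => (hasDerivAt_avgKernel x z (hpos τ hτ)).const_mul (g z))).2
  · filter_upwards [hnhds] with τ hτ
    exact (integrable_mul_avgKernel hg (hpos τ hτ) (hτ.2.trans ht₁R)).aestronglyMeasurable
  · simp_rw [← hderiv]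
    exact ((integrable_mul_lap isOpen_ball hg
      (isTestFun_bump x ht htR)).const_mul _).aestronglyMeasurable
  · by_cases hz : z ∈ closedBall x t₁
    · rw [indicator_of_mem hz, norm_mul]
      exact mul_le_mul_of_nonneg_left (hC τ (Ioo_subset_Icc_self hτ) z hz) (norm_nonneg _)
    · have hz' : z ∉ closedBall x τ := fun h => hz (closedBall_subset_closedBall hτ.2.le h)
      simp [indicator_of_notMem hz, lap_bump_eq_zero (hpos τ hτ) hz']
  · rw [integrable_indicator_iff measurableSet_closedBall]
    exact ((hg.mono (closedBall_subset_ball ht₁R)).abs.mul continuousOn_const).integrableOn_compact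
      (isCompact_closedBall x t₁)

lemma mul_avgKernel_le_mul_avgKernel {h : ES N → ℝ} (ht : 0 < t) (hgh : ∀ z ∈ ball x t, g z ≤ h z)
    (z : ES N) : g z * avgKernel x t z ≤ h z * avgKernel x t z := by
  by_cases hz : z ∈ ball x t
  · exact mul_le_mul_of_nonneg_right (hgh z hz) (avgKernel_nonneg x ht.le z)
  · rw [mem_ball, dist_eq_norm, not_lt] at hz
    simp [avgKernel_eq_zero ht hz]

lemma mul_kernelMass_le_weightedMean (hg : ContinuousOn g (ball x R)) (ht : 0 < t) (htR : t < R)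
    (hc : ∀ z ∈ ball x t, c ≤ g z) : c * kernelMass N ≤ weightedMean g x t := by
  rw [← integral_avgKernel x ht, ← integral_const_mul]
  exact integral_mono ((integrable_avgKernel x ht).const_mul c) (integrable_mul_avgKernel hg ht htR)
    (mul_avgKernel_le_mul_avgKernel (g := fun _ => c) ht hc)

lemma weightedMean_le_mul_kernelMass (hg : ContinuousOn g (ball x R)) (ht : 0 < t) (htR : t < R)
    (hc : ∀ z ∈ ball x t, g z ≤ c) : weightedMean g x t ≤ c * kernelMass N := by
  rw [← integral_avgKernel x ht, ← integral_const_mul]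
  exact integral_mono (integrable_mul_avgKernel hg ht htR) ((integrable_avgKernel x ht).const_mul c)
    (mul_avgKernel_le_mul_avgKernel (h := fun _ => c) ht hc)

lemma tendsto_weightedMean (hg : ContinuousOn g (ball x R)) (hR : 0 < R) :
    Tendsto (weightedMean g x) (𝓝[>] 0) (𝓝 (g x * kernelMass N)) := by
  have hmass := kernelMass_pos N
  refine Metric.tendsto_nhds.2 fun ε hε => ?_
  obtain ⟨η, hη, hgη⟩ := Metric.continuousAt_iff.1
    (hg.continuousAt (ball_mem_nhds x hR)) (ε / 2 / kernelMass N) (by positivity)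
  filter_upwards [Ioo_mem_nhdsGT (lt_min hη hR)] with t ht
  have htη := ht.2.trans_le (min_le_left η R)
  have htR := ht.2.trans_le (min_le_right η R)
  have hclose : ∀ z ∈ ball x t, |g z - g x| ≤ ε / 2 / kernelMass N := fun z hz =>
    (hgη (lt_trans hz htη)).le
  have hlower := mul_kernelMass_le_weightedMean hg ht.1 htR
    fun z hz => sub_le_of_abs_sub_le_left (hclose z hz)
  have hupper := weightedMean_le_mul_kernelMass hg ht.1 htR
    fun z hz => (sub_le_iff_le_add'.1 (le_of_abs_le (hclose z hz)))
  rw [sub_mul, div_mul_cancel₀ _ hmass.ne'] at hlower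
  rw [add_mul, div_mul_cancel₀ _ hmass.ne'] at hupper
  rw [Real.dist_eq, abs_lt]
  constructor <;> linarith

lemma WeakLapGE.monotoneOn_weightedMean (hg : ContinuousOn g (ball x R))
    (hsub : WeakLapGE (ball x R) 0 g) : MonotoneOn (weightedMean g x) (Ioo 0 R) := by
  refine monotoneOn_of_deriv_nonneg (convex_Ioo 0 R)
    (fun τ hτ => (hasDerivAt_weightedMean hg hτ.1 hτ.2).continuousAt.continuousWithinAt)
    (fun τ hτ => ?_) (fun τ hτ => ?_) <;> rw [interior_Ioo] at hτ
  · exact (hasDerivAt_weightedMean hg hτ.1 hτ.2).differentiableAt.differentiableWithinAt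
  · rw [(hasDerivAt_weightedMean hg hτ.1 hτ.2).deriv]
    have hlap := hsub _ (isTestFun_bump x hτ.1 hτ.2) (bump_nonneg x τ)
    rw [zero_mul] at hlap
    have := hτ.1
    positivity

lemma WeakLapGE.strictMonoOn_weightedMean (hg : ContinuousOn g (ball x R)) (hc : 0 < c)
    (hsub : WeakLapGE (ball x R) c g) : StrictMonoOn (weightedMean g x) (Ioo 0 R) := by
  refine strictMonoOn_of_deriv_pos (convex_Ioo 0 R)
    (fun τ hτ => (hasDerivAt_weightedMean hg hτ.1 hτ.2).continuousAt.continuousWithinAt)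
    (fun τ hτ => ?_)
  rw [interior_Ioo] at hτ
  rw [(hasDerivAt_weightedMean hg hτ.1 hτ.2).deriv]
  have hlap := (mul_pos hc (integral_bump_pos x hτ.1)).trans_le
    (hsub _ (isTestFun_bump x hτ.1 hτ.2) (bump_nonneg x τ))
  have := hτ.1
  positivity

lemma WeakLapGE.mono_const {c' : ℝ} (hsub : WeakLapGE D c g) (hc : c' ≤ c) :
    WeakLapGE D c' g := fun φ hφ hφ0 =>
  (mul_le_mul_of_nonneg_right hc (integral_nonneg hφ0)).trans (hsub φ hφ hφ0)

theorem WeakLapGE.mul_kernelMass_le_weightedMean (hg : ContinuousOn g (ball x R)) (ht : 0 < t)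
    (htR : t < R) (hsub : WeakLapGE (ball x R) 0 g) :
    g x * kernelMass N ≤ weightedMean g x t := by
  refine le_of_tendsto (tendsto_weightedMean hg (ht.trans htR)) ?_
  filter_upwards [Ioo_mem_nhdsGT ht] with τ hτ
  exact hsub.monotoneOn_weightedMean hg ⟨hτ.1, hτ.2.trans htR⟩ ⟨ht, htR⟩ hτ.2.le

theorem WeakLapGE.exists_lt_mem_ball (hg : ContinuousOn g (ball x R)) (hR : 0 < R) (hc : 0 < c)
    (hsub : WeakLapGE (ball x R) c g) : ∃ z ∈ ball x R, g x < g z := by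
  by_contra! hmax
  have hstrict := hsub.strictMonoOn_weightedMean hg hc ⟨by linarith, by linarith⟩
    ⟨by linarith, by linarith⟩ (by linarith : R / 3 < R / 2)
  have hlower := (hsub.mono_const hc.le).mul_kernelMass_le_weightedMean hg
    (t := R / 3) (by linarith) (by linarith)
  have hupper := weightedMean_le_mul_kernelMass hg (t := R / 2) (by linarith) (by linarith)
    fun z hz => hmax z (ball_subset_ball (by linarith) hz)
  linarith

lemma integral_mul_bump_le_weightedMean (hg : ContinuousOn g (ball x R)) (ht : 0 < t)
    (htR : t < R) (hpos : ∀ z ∈ ball x R, 0 ≤ g z) :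
    (t ^ N)⁻¹ * ∫ z, g z * bump x t z ≤ weightedMean g x t := by
  rw [← integral_const_mul]
  refine integral_mono ((integrable_mul_testFun isOpen_ball hg
    (isTestFun_bump x ht htR)).const_mul _) (integrable_mul_avgKernel hg ht htR) fun z => ?_
  dsimp only
  rw [mul_left_comm]
  by_cases hz : z ∈ ball x R
  · exact mul_le_mul_of_nonneg_left (bump_le_avgKernel x ht.le z) (hpos z hz)
  · rw [mem_ball, dist_eq_norm, not_lt] at hz
    simp [avgKernel_eq_zero ht (htR.le.trans hz), bump_eq_zero ht (htR.le.trans hz)]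

lemma antitoneOn_weightedMean_mul_exp {l : ℝ} (hg : ContinuousOn g (ball x R)) (hl : 0 ≤ l)
    (hpos : ∀ z ∈ ball x R, 0 ≤ g z)
    (hsuper : ∀ φ, IsTestFun (ball x R) φ → (∀ z, 0 ≤ φ z) →
      ∫ z, g z * lap φ z ≤ l * ∫ z, g z * φ z) :
    AntitoneOn (fun τ => weightedMean g x τ * Real.exp (-(l * τ ^ 2 / 4))) (Ioo 0 R) := by
  have hderiv : ∀ τ ∈ Ioo 0 R, HasDerivAt
      (fun τ => weightedMean g x τ * Real.exp (-(l * τ ^ 2 / 4)))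
      ((1 / 2 * τ * (τ ^ N)⁻¹ * ∫ z, g z * lap (bump x τ) z) * Real.exp (-(l * τ ^ 2 / 4))
        + weightedMean g x τ * (Real.exp (-(l * τ ^ 2 / 4)) * (-(l * τ / 2)))) τ := by
    intro τ hτ
    refine (hasDerivAt_weightedMean hg hτ.1 hτ.2).mul (HasDerivAt.exp ?_)
    refine (((hasDerivAt_pow 2 τ).const_mul l).div_const 4).neg.congr_deriv ?_
    norm_num
    ring
  refine antitoneOn_of_deriv_nonpos (convex_Ioo 0 R)
    (fun τ hτ => (hderiv τ hτ).continuousAt.continuousWithinAt)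
    (fun τ hτ => ?_) (fun τ hτ => ?_) <;> rw [interior_Ioo] at hτ
  · exact (hderiv τ hτ).differentiableAt.differentiableWithinAt
  · have hτ0 := hτ.1
    have hgrowth : 1 / 2 * τ * (τ ^ N)⁻¹ * ∫ z, g z * lap (bump x τ) z
        ≤ weightedMean g x τ * (l * τ / 2) := calc
      _ ≤ 1 / 2 * τ * (τ ^ N)⁻¹ * (l * ∫ z, g z * bump x τ z) := mul_le_mul_of_nonneg_left
        (hsuper _ (isTestFun_bump x hτ.1 hτ.2) (bump_nonneg x τ)) (by positivity)
      _ = (l * τ / 2) * ((τ ^ N)⁻¹ * ∫ z, g z * bump x τ z) := by ring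
      _ ≤ (l * τ / 2) * weightedMean g x τ := mul_le_mul_of_nonneg_left
        (integral_mul_bump_le_weightedMean hg hτ.1 hτ.2 hpos) (by positivity)
      _ = _ := mul_comm _ _
    rw [(hderiv τ hτ).deriv]
    linarith [mul_le_mul_of_nonneg_right hgrowth (Real.exp_pos (-(l * τ ^ 2 / 4))).le]

theorem weightedMean_le_exp_mul {l : ℝ} (hg : ContinuousOn g (ball x R)) (ht : 0 < t)
    (htR : t < R) (hl : 0 ≤ l) (hpos : ∀ z ∈ ball x R, 0 ≤ g z)
    (hsuper : ∀ φ, IsTestFun (ball x R) φ → (∀ z, 0 ≤ φ z) →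
      ∫ z, g z * lap φ z ≤ l * ∫ z, g z * φ z) :
    weightedMean g x t ≤ Real.exp (l * t ^ 2 / 4) * (g x * kernelMass N) := by
  have hexp : Tendsto (fun τ : ℝ => Real.exp (-(l * τ ^ 2 / 4))) (𝓝[>] 0) (𝓝 1) := by
    have hcont : Continuous fun τ : ℝ => Real.exp (-(l * τ ^ 2 / 4)) := by fun_prop
    simpa using (hcont.tendsto 0).mono_left nhdsWithin_le_nhds
  have hlim : weightedMean g x t * Real.exp (-(l * t ^ 2 / 4)) ≤ g x * kernelMass N * 1 := by
    refine ge_of_tendsto ((tendsto_weightedMean hg (ht.trans htR)).mul hexp) ?_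
    filter_upwards [Ioo_mem_nhdsGT ht] with τ hτ
    exact antitoneOn_weightedMean_mul_exp hg hl hpos hsuper
      ⟨hτ.1, hτ.2.trans htR⟩ ⟨ht, htR⟩ hτ.2.le
  rwa [mul_one, Real.exp_neg, ← div_eq_mul_inv, div_le_iff₀' (Real.exp_pos _)] at hlim

lemma volume_ball_mul_le_weightedMean {p : ES N} {s : ℝ} (hg : ContinuousOn g (ball x R))
    (ht : 0 < t) (htR : t < R) (hs : 0 < s) (hpos : ∀ z ∈ ball x t, 0 ≤ g z)
    (hsub : ball p s ⊆ ball x (3 / 4 * t)) (hc0 : 0 ≤ c) (hc : ∀ z ∈ ball p s, c ≤ g z) :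
    c * (bumpProfile (9 / 16) * (t ^ N)⁻¹ * (s ^ N * volume.real (ball (0 : ES N) 1)))
      ≤ weightedMean g x t := by
  have hvol : volume.real (ball p s) = s ^ N * volume.real (ball (0 : ES N) 1) := by
    rw [Measure.real, Measure.addHaar_ball_of_pos _ _ hs]
    simp [ENNReal.toReal_mul, ENNReal.toReal_ofReal (pow_nonneg hs.le N), Measure.real]
  have hint : c * (bumpProfile (9 / 16) * (t ^ N)⁻¹ * (s ^ N * volume.real (ball (0 : ES N) 1)))
      = ∫ z, (ball p s).indicator (fun _ => c * (bumpProfile (9 / 16) * (t ^ N)⁻¹)) z := by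
    rw [integral_indicator measurableSet_ball, setIntegral_const, hvol, smul_eq_mul]
    ring
  rw [hint]
  refine integral_mono ?_ (integrable_mul_avgKernel hg ht htR) fun z => ?_
  · rw [integrable_indicator_iff measurableSet_ball]
    exact integrableOn_const measure_ball_lt_top.ne
  · by_cases hz : z ∈ ball p s
    · rw [indicator_of_mem hz]
      exact mul_le_mul (hc z hz) (bumpProfile_le_avgKernel ht (hsub hz))
        (mul_nonneg (bumpProfile_nonneg _) (by positivity)) (hc0.trans (hc z hz))
    · rw [indicator_of_notMem hz, ← zero_mul (avgKernel x t z)]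
      exact mul_avgKernel_le_mul_avgKernel (g := fun _ => 0) ht hpos z

lemma avgKernel_le_of_dist_le {y z : ES N} (ht : 0 < t) (hxy : dist y x ≤ t / 2)
    (hz : z ∈ ball y (t / 4)) {B : ℝ} (hB : ∀ s, 0 ≤ s → kernelProfile s ≤ B) :
    avgKernel y (t / 4) z ≤ 4 ^ N * B / bumpProfile (9 / 16) * avgKernel x t z := by
  have hprofile : 0 < bumpProfile (9 / 16) := bumpProfile_pos (by norm_num)
  have hB0 : 0 ≤ B := (kernelProfile_nonneg 0).trans (hB 0 le_rfl)
  have hzx : z ∈ ball x (3 / 4 * t) := by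
    rw [mem_ball] at hz ⊢
    linarith [dist_triangle z y x]
  calc avgKernel y (t / 4) z ≤ ((t / 4) ^ N)⁻¹ * B :=
        mul_le_mul_of_nonneg_left (hB _ (by positivity)) (by positivity)
    _ = 4 ^ N * B / bumpProfile (9 / 16) * (bumpProfile (9 / 16) * (t ^ N)⁻¹) := by
        rw [div_pow]
        field_simp
    _ ≤ _ := mul_le_mul_of_nonneg_left (bumpProfile_le_avgKernel ht hzx) (by positivity)

lemma weightedMean_le_of_dist_le {y : ES N} (hg : ContinuousOn g (ball x R)) (ht : 0 < t)
    (htR : t < R) (hpos : ∀ z ∈ ball x t, 0 ≤ g z) (hxy : dist y x ≤ t / 2)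
    {B : ℝ} (hB : ∀ s, 0 ≤ s → kernelProfile s ≤ B) :
    weightedMean g y (t / 4) ≤ 4 ^ N * B / bumpProfile (9 / 16) * weightedMean g x t := by
  have hsub : ball y (t / 2) ⊆ ball x t := ball_subset_ball' (by linarith)
  have hB0 : 0 ≤ B := (kernelProfile_nonneg 0).trans (hB 0 le_rfl)
  have hprofile : 0 < bumpProfile (9 / 16) := bumpProfile_pos (by norm_num)
  rw [weightedMean, weightedMean, ← integral_const_mul]
  refine integral_mono (integrable_mul_avgKernel (hg.mono (hsub.trans (ball_subset_ball htR.le)))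
    (by linarith) (by linarith)) ((integrable_mul_avgKernel hg ht htR).const_mul _) fun z => ?_
  dsimp only
  rw [mul_left_comm]
  by_cases hz : z ∈ ball y (t / 4)
  · exact mul_le_mul_of_nonneg_left (avgKernel_le_of_dist_le ht hxy hz hB)
      (hpos z (hsub (ball_subset_ball (by linarith) hz)))
  · rw [mem_ball, dist_eq_norm, not_lt] at hz
    rw [avgKernel_eq_zero (by linarith) hz, mul_zero, mul_left_comm]
    refine mul_nonneg (by positivity) ?_
    rw [← zero_mul (avgKernel x t z)]
    exact mul_avgKernel_le_mul_avgKernel (g := fun _ => 0) ht hpos z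

end WeightedMean

/-! ### The maximum principle and decay near an exterior ball -/

section MaximumPrinciple

variable {N : ℕ} {g h : ES N → ℝ} {D D' : Set (ES N)} {c c' : ℝ}

lemma IsTestFun.mono {φ : ES N → ℝ} (hφ : IsTestFun D φ) (hD : D ⊆ D') : IsTestFun D' φ :=
  ⟨hφ.1, hφ.2.1, hφ.2.2.trans hD⟩

lemma WeakLapGE.mono (hg : WeakLapGE D' c g) (hD : D ⊆ D') : WeakLapGE D c g :=
  fun φ hφ => hg φ (hφ.mono hD)

lemma WeakLapGE.const_mul {α : ℝ} (hg : WeakLapGE D c g) (hα : 0 ≤ α) :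
    WeakLapGE D (α * c) fun z => α * g z := fun φ hφ hφ0 => by
  simp_rw [mul_assoc, integral_const_mul]
  exact mul_le_mul_of_nonneg_left (hg φ hφ hφ0) hα

lemma WeakLapGE.add (hD : IsOpen D) (hgc : ContinuousOn g D) (hhc : ContinuousOn h D)
    (hg : WeakLapGE D c g) (hh : WeakLapGE D c' h) :
    WeakLapGE D (c + c') fun z => g z + h z := fun φ hφ hφ0 => by
  simp_rw [add_mul]
  rw [integral_add (integrable_mul_lap hD hgc hφ) (integrable_mul_lap hD hhc hφ)]
  exact add_le_add (hg φ hφ hφ0) (hh φ hφ hφ0)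

lemma weakLapGE_of_le_lap (hg : ContDiff ℝ (⊤ : ℕ∞) g) (hc : ∀ z ∈ D, c ≤ lap g z) :
    WeakLapGE D c g := fun φ hφ hφ0 => by
  rw [integral_mul_lap hg hφ.1 hφ.2.1, ← integral_const_mul]
  refine integral_mono ((hφ.1.continuous.integrable_of_hasCompactSupport hφ.2.1).const_mul c)
    (((continuous_lap hg).mul hφ.1.continuous).integrable_of_hasCompactSupport
      (HasCompactSupport.mul_left hφ.2.1)) fun z => ?_
  by_cases hz : z ∈ tsupport φ
  · exact mul_le_mul_of_nonneg_right (hc z (hφ.2.2 hz)) (hφ0 z)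
  · simp only [image_eq_zero_of_notMem_tsupport hz, mul_zero, le_refl]

theorem le_of_weakLapGE {K : Set (ES N)} {M : ℝ} (hK : IsCompact K) (hg : ContinuousOn g K)
    (hlap : ∀ x ∈ K, M < g x →
      ∃ δ > 0, ball x δ ⊆ K ∧ ∃ c > 0, WeakLapGE (ball x δ) c g) {x : ES N} (hx : x ∈ K) :
    g x ≤ M := by
  obtain ⟨y, hy, hmax⟩ := hK.exists_isMaxOn ⟨x, hx⟩ hg
  refine (hmax hx).trans (not_lt.1 fun hMy => ?_)
  obtain ⟨δ, hδ, hball, c, hc, hsub⟩ := hlap y hy hMy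
  obtain ⟨z, hz, hyz⟩ := hsub.exists_lt_mem_ball (hg.mono hball) hδ hc
  exact hyz.not_ge (hmax (hball hz))

/-- The Gaussian barrier centred at `b`, which is strictly subharmonic away from `b`. -/
def expBarrier (b : ES N) (q : ℝ) (z : ES N) : ℝ := Real.exp (-q * ‖z - b‖ ^ 2)

lemma contDiff_expBarrier (b : ES N) (q : ℝ) : ContDiff ℝ (⊤ : ℕ∞) (expBarrier b q) :=
  Real.contDiff_exp.comp (contDiff_const.mul ((contDiff_id.sub contDiff_const).norm_sq ℝ))

lemma lap_expBarrier (b : ES N) (q : ℝ) (z : ES N) :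
    lap (expBarrier b q) z = (4 * q ^ 2 * ‖z - b‖ ^ 2 - 2 * N * q) * expBarrier b q z := by
  have hderiv (s : ℝ) : HasDerivAt (fun s : ℝ => Real.exp (-q * s)) (-q * Real.exp (-q * s)) s :=
    ((hasDerivAt_id s).const_mul (-q)).exp.congr_deriv (by simp only [id, mul_one, mul_comm])
  unfold expBarrier
  rw [lap_comp_norm_sub_sq hderiv (fun s => (hderiv s).const_mul (-q)) b z]
  ring

variable {b z : ES N} {q r : ℝ}

lemma expBarrier_le (hq : 0 ≤ q) (hr : 0 ≤ r) (hz : r ≤ ‖z - b‖) :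
    expBarrier b q z ≤ Real.exp (-(q * r ^ 2)) := by
  unfold expBarrier
  rw [neg_mul]
  gcongr

lemma le_expBarrier (hq : 0 ≤ q) (hz : ‖z - b‖ ≤ r) :
    Real.exp (-(q * r ^ 2)) ≤ expBarrier b q z := by
  unfold expBarrier
  rw [neg_mul]
  gcongr

lemma weakLapGE_expBarrier {R : ℝ} (hr : 0 < r) (hD : D ⊆ closedBall b R \ ball b r) :
    WeakLapGE D (2 * N * (N / r ^ 2) * Real.exp (-(N / r ^ 2 * R ^ 2)))
      (expBarrier b (N / r ^ 2)) := by
  refine weakLapGE_of_le_lap (contDiff_expBarrier b _) fun z hz => ?_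
  obtain ⟨hzR, hzr⟩ := hD hz
  rw [mem_closedBall, dist_eq_norm] at hzR
  rw [mem_ball, not_lt, dist_eq_norm] at hzr
  have hcoeff : 2 * N * (N / r ^ 2)
      ≤ 4 * (N / r ^ 2 : ℝ) ^ 2 * ‖z - b‖ ^ 2 - 2 * N * (N / r ^ 2) := by
    have hrz : r ^ 2 ≤ ‖z - b‖ ^ 2 := by gcongr
    have := mul_le_mul_of_nonneg_left hrz (by positivity : 0 ≤ 4 * (N / r ^ 2 : ℝ) ^ 2)
    have hr2 : 4 * (N / r ^ 2 : ℝ) ^ 2 * r ^ 2 = 4 * N * (N / r ^ 2) := by field_simp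
    linarith
  rw [lap_expBarrier]
  exact mul_le_mul hcoeff (le_expBarrier (by positivity) hzR) (Real.exp_pos _).le
    (le_trans (by positivity) hcoeff)

lemma exists_ball_subset_closedBall_diff_ball {x : ES N} {R ε : ℝ} (hε : 0 < ε) (hxr : r < dist x b)
    (hxR : dist x b < R) :
    ∃ δ > 0, ball x δ ⊆ ball x ε ∧ ball x δ ⊆ closedBall b R \ ball b r := by
  refine ⟨min ε (min (R - dist x b) (dist x b - r)),
    lt_min hε (lt_min (by linarith) (by linarith)), ball_subset_ball (min_le_left _ _),
    fun z hz => ?_⟩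
  obtain ⟨-, hzR, hzr⟩ : dist z x < ε ∧ dist z x < R - dist x b ∧ dist z x < dist x b - r := by
    simpa only [mem_ball, lt_min_iff] using hz
  refine ⟨mem_closedBall.2 (by linarith [dist_triangle z x b]), fun hzb => ?_⟩
  linarith [dist_triangle_left x b z, mem_ball.1 hzb]

/-- Adding a multiple of the barrier to `g` keeps its values on both spheres bounding the annulus
below `S * exp (-(q * r ^ 2))`, while making it strictly subharmonic where it is positive. -/
lemma add_expBarrier_le {S R : ℝ} (hN : 0 < N) (hr : 0 < r) (hrR : r < R) (hS : 0 < S)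
    (hgc : ContinuousOn g (closedBall b R)) (hg0 : ∀ z ∈ closedBall b r, g z = 0)
    (hgS : ∀ z ∈ closedBall b R, g z ≤ S)
    (hsub : ∀ z ∈ ball b R, 0 < g z → ∃ ε > 0, WeakLapGE (ball z ε) 0 g) {x : ES N}
    (hx : x ∈ closedBall b R \ ball b r) :
    (Real.exp (-(N / r ^ 2 * r ^ 2)) - Real.exp (-(N / r ^ 2 * R ^ 2))) * g x
      + S * expBarrier b (N / r ^ 2) x ≤ S * Real.exp (-(N / r ^ 2 * r ^ 2)) := by
  set q : ℝ := N / r ^ 2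
  have hq0 : 0 < q := by positivity
  have hgap : Real.exp (-(q * R ^ 2)) < Real.exp (-(q * r ^ 2)) := by gcongr
  have hEc : Continuous fun z => S * expBarrier b q z :=
    continuous_const.mul (contDiff_expBarrier b q).continuous
  have hgc' : ContinuousOn (fun z => (Real.exp (-(q * r ^ 2)) - Real.exp (-(q * R ^ 2))) * g z)
    (closedBall b R) := continuousOn_const.mul hgc
  refine le_of_weakLapGE ((isCompact_closedBall b R).diff isOpen_ball)
    ((hgc'.add hEc.continuousOn).mono sdiff_subset) (fun y hy hlt => ?_) hx
  rw [Pi.add_apply] at hlt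
  have hyr : r ≤ ‖y - b‖ := by simpa [dist_eq_norm] using hy.2
  have hyR : ‖y - b‖ ≤ R := by simpa [dist_eq_norm] using hy.1
  have hEr := mul_le_mul_of_nonneg_left (expBarrier_le hq0.le hr.le hyr) hS.le
  have hgy : 0 < g y := pos_of_mul_pos_right (b := g y) (by linarith) (sub_pos.2 hgap).le
  have hyr' : r < dist y b := by
    rw [dist_eq_norm]
    refine hyr.lt_of_ne fun h => hgy.ne' (hg0 y ?_)
    rw [mem_closedBall, dist_eq_norm, h]
  have hyR' : dist y b < R := by
    rw [dist_eq_norm]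
    refine hyR.lt_of_ne fun h => ?_
    have hER := mul_le_mul_of_nonneg_left (expBarrier_le hq0.le (hr.trans hrR).le h.ge) hS.le
    linarith [mul_le_mul_of_nonneg_left (hgS y hy.1) (sub_pos.2 hgap).le]
  obtain ⟨ε, hε, hgε⟩ := hsub y (mem_ball.2 hyR') hgy
  obtain ⟨δ, hδ, hδε, hδK⟩ := exists_ball_subset_closedBall_diff_ball hε hyr' hyR'
  refine ⟨δ, hδ, hδK, _, ?_, ((hgε.mono hδε).const_mul (sub_pos.2 hgap).le).add isOpen_ball
    (hgc'.mono (hδK.trans sdiff_subset)) hEc.continuousOn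
    ((weakLapGE_expBarrier hr hδK).const_mul hS.le)⟩
  have : (0 : ℝ) < N := Nat.cast_pos.2 hN
  positivity

/-- The factor by which the supremum of a nonnegative subharmonic function drops near an exterior
ball of relative radius `κ`. -/
def decayFactor (N : ℕ) (κ : ℝ) : ℝ :=
  (Real.exp (-(N / κ ^ 2 * κ ^ 2)) - Real.exp (-(N / κ ^ 2 * 2 ^ 2)))
    / (Real.exp (-(N / κ ^ 2 * κ ^ 2)) - Real.exp (-(N / κ ^ 2 * 4 ^ 2)))

lemma exp_neg_mul_sq_lt {k s t : ℝ} (hk : 0 < k) (hs : 0 ≤ s) (hst : s < t) :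
    Real.exp (-(k * t ^ 2)) < Real.exp (-(k * s ^ 2)) := by
  gcongr

lemma decayFactor_mem_Ioo {κ : ℝ} (hN : 0 < N) (hκ : 0 < κ) (hκ1 : κ < 1) :
    decayFactor N κ ∈ Ioo 0 1 := by
  have hk : 0 < (N : ℝ) / κ ^ 2 := div_pos (Nat.cast_pos.2 hN) (by positivity)
  have h2 := exp_neg_mul_sq_lt hk hκ.le (by linarith : κ < 2)
  have h4 := exp_neg_mul_sq_lt hk (by norm_num) (by norm_num : (2 : ℝ) < 4)
  exact ⟨div_pos (by linarith) (by linarith), (div_lt_one (by linarith)).2 (by linarith)⟩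

theorem le_decayFactor_mul {κ η S : ℝ} (hN : 0 < N) (hκ : 0 < κ) (hκ1 : κ < 1) (hη : 0 < η)
    (hS : 0 ≤ S) (hgc : ContinuousOn g (closedBall b (4 * η)))
    (hg0 : ∀ z ∈ closedBall b (κ * η), g z = 0) (hgS : ∀ z ∈ closedBall b (4 * η), g z ≤ S)
    (hsub : ∀ z ∈ ball b (4 * η), 0 < g z → ∃ ε > 0, WeakLapGE (ball z ε) 0 g) {x : ES N}
    (hx : dist x b ≤ 2 * η) : g x ≤ decayFactor N κ * S := by
  rcases hS.eq_or_lt with rfl | hS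
  · rw [mul_zero]
    exact hgS x (mem_closedBall.2 (by linarith))
  by_cases hxb : x ∈ closedBall b (κ * η)
  · rw [hg0 x hxb]
    exact mul_nonneg (decayFactor_mem_Ioo hN hκ hκ1).1.le hS.le
  have hscale (c : ℝ) : N / (κ * η) ^ 2 * (c * η) ^ 2 = N / κ ^ 2 * c ^ 2 := by field_simp
  have hk : 0 < (N : ℝ) / κ ^ 2 := div_pos (Nat.cast_pos.2 hN) (by positivity)
  have hbarrier := add_expBarrier_le hN (mul_pos hκ hη) (by gcongr; linarith) hS hgc hg0 hgS hsub
    ⟨mem_closedBall.2 (by linarith), fun h => hxb (ball_subset_closedBall h)⟩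
  have hE := le_expBarrier (q := N / (κ * η) ^ 2) (by positivity) (dist_eq_norm x b ▸ hx)
  rw [hscale, hscale] at hbarrier
  rw [hscale] at hE
  rw [decayFactor, div_mul_eq_mul_div,
    le_div_iff₀ (sub_pos.2 (exp_neg_mul_sq_lt hk hκ.le (by linarith)))]
  linarith [mul_le_mul_of_nonneg_left hE hS.le]

end MaximumPrinciple

/-! ### The Harnack inequality -/

section Harnack

variable {N : ℕ} {U D : Set (ES N)} {V v φ : ES N → ℝ} {x y z : ES N} {a l C T : ℝ}

lemma LVHarmonic.integral_mul_lap (hv : LVHarmonic U V v) (hφ : IsTestFun U φ) :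
    ∫ z, v z * lap φ z = ∫ z, V z * v z * φ z := by
  have hoff : ∀ z, z ∉ U → z ∉ tsupport φ := fun z hz h => hz (hφ.2.2 h)
  have h := hv.2.2.2 φ hφ
  rwa [setIntegral_eq_integral_of_forall_compl_eq_zero fun z hz => by
      rw [lap_eq_zero_of_notMem_tsupport (hoff z hz), mul_zero],
    setIntegral_eq_integral_of_forall_compl_eq_zero fun z hz => by
      rw [image_eq_zero_of_notMem_tsupport (hoff z hz), mul_zero]] at h

lemma IsTestFun.mul_le_mul {g h : ES N → ℝ} (hφ : IsTestFun D φ) (hφ0 : ∀ z, 0 ≤ φ z)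
    (hgh : ∀ z ∈ D, g z ≤ h z) (z : ES N) : g z * φ z ≤ h z * φ z := by
  by_cases hz : z ∈ tsupport φ
  · exact mul_le_mul_of_nonneg_right (hgh z (hφ.2.2 hz)) (hφ0 z)
  · simp only [image_eq_zero_of_notMem_tsupport hz, mul_zero, le_refl]

lemma LVHarmonic.weakLapGE_zero (hv : LVHarmonic U V v) (hV : ∀ z ∈ U, 0 ≤ V z)
    (hpos : ∀ z ∈ U, 0 ≤ v z) : WeakLapGE U 0 v := fun φ hφ hφ0 => by
  rw [hv.integral_mul_lap hφ, zero_mul]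
  exact integral_nonneg fun z => show 0 ≤ V z * v z * φ z by
    simpa only [zero_mul] using hφ.mul_le_mul (g := fun _ => 0) hφ0
      (fun z hz => mul_nonneg (hV z hz) (hpos z hz)) z

lemma LVHarmonic.integral_mul_lap_le (hv : LVHarmonic U V v) (hD : IsOpen D) (hDU : D ⊆ U)
    (hV : ∀ z ∈ D, V z ∈ Icc 0 l) (hpos : ∀ z ∈ D, 0 ≤ v z) (hφ : IsTestFun D φ)
    (hφ0 : ∀ z, 0 ≤ φ z) : ∫ z, v z * lap φ z ≤ l * ∫ z, v z * φ z := by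
  rw [hv.integral_mul_lap (hφ.mono hDU), ← integral_const_mul]
  refine integral_mono_of_nonneg (.of_forall fun z => show 0 ≤ V z * v z * φ z from ?_)
    ((integrable_mul_testFun hD (hv.1.mono hDU) hφ).const_mul l) (.of_forall fun z => ?_)
  · simpa only [zero_mul] using hφ.mul_le_mul (g := fun _ => 0) hφ0
      (fun z hz => mul_nonneg (hV z hz).1 (hpos z hz)) z
  · simpa only [mul_assoc] using hφ.mul_le_mul hφ0
      (fun z hz => mul_le_mul_of_nonneg_right (hV z hz).2 (hpos z hz)) z

lemma VClass.le_four_mul_div_sq (hV : VClass U a V) (hU : Uᶜ.Nonempty) (hT : 0 < T)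
    (hball : ball x (2 * T) ⊆ U) (hz : z ∈ ball x (3 / 2 * T)) : V z ≤ 4 * a / T ^ 2 := by
  have hzU : z ∈ U := hball (ball_subset_ball (by linarith) hz)
  have hdist : T / 2 ≤ dista U z := (le_infDist hU).2 fun {w} hw => by
    by_contra! hwz
    refine hw (hball (mem_ball.2 ?_))
    linarith [dist_triangle_left w x z, mem_ball.1 hz]
  rw [le_div_iff₀ (by positivity)]
  have hsq : (T / 2) ^ 2 ≤ dista U z ^ 2 := by gcongr
  linarith [(hV.2 z hzU).2, mul_le_mul_of_nonneg_left hsq (hV.2 z hzU).1]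

/-- The interior Harnack inequality for `v` in `U`, with constant `C`. -/
def HarnackOn (U : Set (ES N)) (C : ℝ) (v : ES N → ℝ) : Prop :=
  ∀ ⦃x y : ES N⦄ ⦃T : ℝ⦄, 0 < T → ball x (2 * T) ⊆ U → dist y x ≤ T / 2 → v y ≤ C * v x

lemma LVHarmonic.le_mul_of_dist_le (hv : LVHarmonic U V v) (hU : Uᶜ.Nonempty)
    (hV : VClass U a V) (hpos : ∀ z ∈ U, 0 < v z) (hT : 0 < T) (hball : ball x (2 * T) ⊆ U)
    (hxy : dist y x ≤ T / 2) {B : ℝ} (hB : ∀ s, 0 ≤ s → kernelProfile s ≤ B) :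
    v y ≤ 4 ^ N * B / bumpProfile (9 / 16) * Real.exp a * v x := by
  have hxU : x ∈ U := hball (mem_ball_self (by linarith))
  have ha : 0 ≤ a := (mul_nonneg (hV.2 x hxU).1 (sq_nonneg _)).trans (hV.2 x hxU).2
  have hxball : ball x (3 / 2 * T) ⊆ U := (ball_subset_ball (by linarith)).trans hball
  have hyball : ball y (T / 2) ⊆ ball x (3 / 2 * T) := ball_subset_ball' (by linarith)
  have hcont : ContinuousOn v (ball x (3 / 2 * T)) := hv.1.mono hxball
  have hsub : v y * kernelMass N ≤ weightedMean v y (T / 4) :=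
    ((hv.weakLapGE_zero (fun z hz => (hV.2 z hz).1) fun z hz => (hpos z hz).le).mono
      (hyball.trans hxball)).mul_kernelMass_le_weightedMean (hcont.mono hyball)
      (by linarith) (by linarith)
  have hcompare : weightedMean v y (T / 4) ≤ 4 ^ N * B / bumpProfile (9 / 16) *
      weightedMean v x T :=
    weightedMean_le_of_dist_le hcont hT (by linarith)
      (fun z hz => (hpos z (hxball (ball_subset_ball (by linarith) hz))).le) hxy hB
  have hsuper : weightedMean v x T ≤ Real.exp (4 * a / T ^ 2 * T ^ 2 / 4) *
      (v x * kernelMass N) :=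
    weightedMean_le_exp_mul hcont hT (by linarith) (by positivity)
      (fun z hz => (hpos z (hxball hz)).le) fun φ hφ hφ0 =>
        hv.integral_mul_lap_le isOpen_ball hxball
          (fun z hz => ⟨(hV.2 z (hxball hz)).1, hV.le_four_mul_div_sq hU hT hball hz⟩)
          (fun z hz => (hpos z (hxball hz)).le) hφ hφ0
  rw [show 4 * a / T ^ 2 * T ^ 2 / 4 = a by field_simp] at hsuper
  have hB0 : 0 ≤ B := (kernelProfile_nonneg 0).trans (hB 0 le_rfl)
  have hprofile : 0 < bumpProfile (9 / 16) := bumpProfile_pos (by norm_num)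
  refine le_of_mul_le_mul_right ?_ (kernelMass_pos N)
  calc v y * kernelMass N ≤ _ := hsub.trans hcompare
    _ ≤ 4 ^ N * B / bumpProfile (9 / 16) * (Real.exp a * (v x * kernelMass N)) := by gcongr
    _ = _ := by ring

/-- The constant is uniform because `V ≤ 4 a / T ^ 2` on the ball of radius `3 / 2 * T`, so that
`v` is almost superharmonic at scale `T`, besides being subharmonic. -/
theorem exists_harnackOn (N : ℕ) (a : ℝ) :
    ∃ C, 1 ≤ C ∧ ∀ {U : Set (ES N)} {V v : ES N → ℝ}, Uᶜ.Nonempty → VClass U a V →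
      LVHarmonic U V v → (∀ z ∈ U, 0 < v z) → HarnackOn U C v := by
  obtain ⟨B, -, hB⟩ := exists_kernelProfile_le
  refine ⟨max 1 (4 ^ N * B / bumpProfile (9 / 16) * Real.exp a), le_max_left _ _, ?_⟩
  intro U V v hU hV hv hpos x y T hT hball hxy
  exact (hv.le_mul_of_dist_le hU hV hpos hT hball hxy hB).trans
    (mul_le_mul_of_nonneg_right (le_max_right _ _)
      (hpos x (hball (mem_ball_self (by linarith)))).le)

theorem HarnackOn.le_pow_mul_of_segment (hv : HarnackOn U C v) (hC : 0 ≤ C) (hT : 0 < T) (m : ℕ)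
    (hseg : ∀ p ∈ segment ℝ x y, ball p (2 * T) ⊆ U) (hxy : dist x y ≤ m * (T / 2)) :
    v y ≤ C ^ m * v x := by
  induction m generalizing x with
  | zero =>
    obtain rfl : x = y := dist_le_zero.1 (by simpa only [Nat.cast_zero, zero_mul] using hxy)
    rw [pow_zero, one_mul]
  | succ m ih =>
    have hm : (0 : ℝ) < (m : ℝ) + 1 := by positivity
    have hs1 : ((m : ℝ) + 1)⁻¹ ≤ 1 := inv_le_one_of_one_le₀ (by linarith [m.cast_nonneg (α := ℝ)])
    set p : ES N := AffineMap.lineMap x y ((m : ℝ) + 1)⁻¹ with hp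
    have hpseg : p ∈ segment ℝ x y := by
      rw [segment_eq_image_lineMap]
      exact ⟨_, ⟨by positivity, hs1⟩, rfl⟩
    push_cast at hxy
    have hpx : dist p x ≤ T / 2 := by
      rwa [hp, dist_lineMap_left, Real.norm_of_nonneg (by positivity), inv_mul_le_iff₀ hm]
    have hpy : dist p y ≤ m * (T / 2) := by
      rw [hp, dist_lineMap_right, Real.norm_of_nonneg (by linarith),
        show 1 - ((m : ℝ) + 1)⁻¹ = m * ((m : ℝ) + 1)⁻¹ by field_simp; ring, mul_assoc]
      gcongr
      rwa [inv_mul_le_iff₀ hm]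
    calc v y ≤ C ^ m * v p := ih (fun w hw => hseg w ((convex_segment x y).segment_subset hpseg
          (right_mem_segment ℝ x y) hw)) hpy
      _ ≤ C ^ m * (C * v x) := by
        gcongr
        exact hv hT (hseg x (left_mem_segment ℝ x y)) hpx
      _ = C ^ (m + 1) * v x := by ring

end Harnack

/-! ### Geometry of the region above a Lipschitz graph -/

section Coordinates

variable {n : ℕ} {f : ES n → ℝ} {r ρ t : ℝ} {x y p : ES (n + 1)}

lemma isLinearMap_firstC : IsLinearMap ℝ (firstC (n := n)) where
  map_add _ _ := rfl
  map_smul _ _ := rfl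

lemma isLinearMap_lastC : IsLinearMap ℝ (lastC (n := n)) where
  map_add _ _ := rfl
  map_smul _ _ := rfl

@[simp]
lemma firstC_single_last (t : ℝ) : firstC (EuclideanSpace.single (Fin.last n) t) = 0 := by
  ext i
  exact PiLp.single_eq_of_ne (p := 2) (β := fun _ => ℝ) (Fin.castSucc_ne_last i) t

@[simp]
lemma lastC_single_last (t : ℝ) : lastC (EuclideanSpace.single (Fin.last n) t) = t :=
  PiLp.single_eq_same (β := fun _ => ℝ) 2 (Fin.last n) t

lemma firstC_mem_segment (hp : p ∈ segment ℝ x y) :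
    firstC p ∈ segment ℝ (firstC x) (firstC y) := by
  obtain ⟨a, b, ha, hb, hab, rfl⟩ := hp
  exact ⟨a, b, ha, hb, hab, rfl⟩

lemma lastC_mem_uIcc (hp : p ∈ segment ℝ x y) : lastC p ∈ uIcc (lastC x) (lastC y) := by
  obtain ⟨a, b, ha, hb, hab, rfl⟩ := hp
  rw [← segment_eq_uIcc]
  exact ⟨a, b, ha, hb, hab, rfl⟩

lemma norm_sq_eq_firstC_lastC (x : ES (n + 1)) : ‖x‖ ^ 2 = ‖firstC x‖ ^ 2 + lastC x ^ 2 := by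
  rw [EuclideanSpace.real_norm_sq_eq, EuclideanSpace.real_norm_sq_eq, Fin.sum_univ_castSucc]
  rfl

lemma norm_firstC_le (x : ES (n + 1)) : ‖firstC x‖ ≤ ‖x‖ :=
  le_of_sq_le_sq (by linarith [norm_sq_eq_firstC_lastC x, sq_nonneg (lastC x)]) (norm_nonneg x)

lemma abs_lastC_le (x : ES (n + 1)) : |lastC x| ≤ ‖x‖ :=
  abs_le_of_sq_le_sq (by linarith [norm_sq_eq_firstC_lastC x, sq_nonneg ‖firstC x‖])
    (norm_nonneg x)

lemma norm_le_norm_firstC_add (x : ES (n + 1)) : ‖x‖ ≤ ‖firstC x‖ + |lastC x| := by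
  refine le_of_sq_le_sq ?_ (by positivity)
  rw [norm_sq_eq_firstC_lastC x, add_sq, sq_abs]
  linarith [mul_nonneg (norm_nonneg (firstC x)) (abs_nonneg (lastC x))]

lemma dist_firstC_le (x y : ES (n + 1)) : dist (firstC x) (firstC y) ≤ dist x y := by
  rw [dist_eq_norm, dist_eq_norm]
  exact norm_firstC_le (x - y)

lemma dist_lastC_le (x y : ES (n + 1)) : |lastC x - lastC y| ≤ dist x y := by
  rw [dist_eq_norm]
  exact abs_lastC_le (x - y)

lemma norm_le_norm_add_dist (x y : ES n) : ‖x‖ ≤ ‖y‖ + dist x y :=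
  dist_eq_norm x y ▸ norm_le_norm_add_norm_sub' x y

lemma norm_firstC_le_add_dist (x y : ES (n + 1)) : ‖firstC x‖ ≤ ‖firstC y‖ + dist x y := by
  linarith [norm_le_norm_add_dist (firstC x) (firstC y), dist_firstC_le x y]

lemma continuous_firstC : Continuous (firstC (n := n)) :=
  isLinearMap_firstC.mk'.continuous_of_finiteDimensional

lemma continuous_lastC : Continuous (lastC (n := n)) :=
  isLinearMap_lastC.mk'.continuous_of_finiteDimensional

lemma isOpen_norm_firstC_lt (r : ℝ) : IsOpen {x : ES (n + 1) | ‖firstC x‖ < r} :=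
  isOpen_lt continuous_firstC.norm continuous_const

/-- The signed height of `x` above the graph of `f`, measured along the last axis. -/
def height (f : ES n → ℝ) (x : ES (n + 1)) : ℝ := lastC x - f (firstC x)

/-- The point `x` moved by `t` along the last axis. -/
def raise (x : ES (n + 1)) (t : ℝ) : ES (n + 1) := x + EuclideanSpace.single (Fin.last n) t

@[simp]
lemma firstC_raise (x : ES (n + 1)) (t : ℝ) : firstC (raise x t) = firstC x := by
  rw [raise, isLinearMap_firstC.map_add, firstC_single_last, add_zero]

@[simp]
lemma lastC_raise (x : ES (n + 1)) (t : ℝ) : lastC (raise x t) = lastC x + t := by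
  rw [raise, isLinearMap_lastC.map_add, lastC_single_last]

@[simp]
lemma height_raise (f : ES n → ℝ) (x : ES (n + 1)) (t : ℝ) :
    height f (raise x t) = height f x + t := by
  rw [height, height, firstC_raise, lastC_raise, sub_add_eq_add_sub]

@[simp]
lemma dist_raise (x : ES (n + 1)) (t : ℝ) : dist (raise x t) x = |t| := by
  rw [raise, dist_self_add_left, PiLp.norm_single, Real.norm_eq_abs]

lemma mem_Ucyl_iff : x ∈ Ucyl f r ρ ↔ ‖firstC x‖ < r ∧ 0 < height f x ∧ lastC x < ρ := by
  rw [height, sub_pos]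
  rfl

lemma notMem_Ucyl_of_height_nonpos (hx : height f x ≤ 0) : x ∉ Ucyl f r ρ :=
  fun h => hx.not_gt (mem_Ucyl_iff.1 h).2.1

lemma nonempty_compl_Ucyl : (Ucyl f r ρ)ᶜ.Nonempty :=
  ⟨EuclideanSpace.single (Fin.last n) ρ, fun h => by simpa using (mem_Ucyl_iff.1 h).2.2⟩

end Coordinates

/-- The standing hypotheses on the graph of `f`: it passes through the origin and has slope at
most `ρ / (10 * r)`, so that it stays well below the height `ρ / 2` of the reference point. -/
structure LipschitzGraph {n : ℕ} (r ρ : ℝ) (f : ES n → ℝ) : Prop where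
  radius_pos : 0 < r
  ten_mul_lt : 10 * r < ρ
  map_zero : f 0 = 0
  lipschitzOnWith : LipschitzOnWith (Real.toNNReal (ρ / (10 * r))) f (ball 0 r)

/-- A Lipschitz constant of `height f`, for `f` a `ρ / (10 * r)`-Lipschitz function. -/
def heightLip (r ρ : ℝ) : ℝ := ρ / (10 * r) + 1

/-- The reference point `A = (0, …, 0, ρ / 2)`. -/
abbrev refPoint (n : ℕ) (ρ : ℝ) : ES (n + 1) := EuclideanSpace.single (Fin.last n) (ρ / 2)

lemma two_lt_heightLip {r ρ : ℝ} (hr : 0 < r) (hρ : 10 * r < ρ) : 2 < heightLip r ρ := by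
  have : 1 < ρ / (10 * r) := (one_lt_div (by positivity)).2 hρ
  rw [heightLip]
  linarith

namespace LipschitzGraph

variable {n : ℕ} {f : ES n → ℝ} {r ρ t : ℝ} {x y z : ES (n + 1)}

lemma two_lt_heightLip (G : LipschitzGraph r ρ f) : 2 < heightLip r ρ :=
  Anc.two_lt_heightLip G.radius_pos G.ten_mul_lt

lemma abs_sub_le (G : LipschitzGraph r ρ f) {x y : ES n} (hx : ‖x‖ < r) (hy : ‖y‖ < r) :
    |f x - f y| ≤ ρ / (10 * r) * dist x y := by
  have h := G.lipschitzOnWith.dist_le_mul x (mem_ball_zero_iff.2 hx) y (mem_ball_zero_iff.2 hy)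
  have := G.radius_pos
  have := G.ten_mul_lt
  rwa [Real.coe_toNNReal _ (div_nonneg (by linarith) (by linarith)), Real.dist_eq] at h

lemma abs_height_sub_le (G : LipschitzGraph r ρ f) (hx : ‖firstC x‖ < r) (hy : ‖firstC y‖ < r) :
    |height f x - height f y| ≤ heightLip r ρ * dist x y := by
  have := G.radius_pos
  have := G.ten_mul_lt
  calc |height f x - height f y|
      = |(lastC x - lastC y) - (f (firstC x) - f (firstC y))| := by
        rw [height, height, sub_sub_sub_comm]
    _ ≤ |lastC x - lastC y| + |f (firstC x) - f (firstC y)| := abs_sub _ _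
    _ ≤ dist x y + ρ / (10 * r) * dist x y :=
        add_le_add (dist_lastC_le x y) ((G.abs_sub_le hx hy).trans
          (mul_le_mul_of_nonneg_left (dist_firstC_le x y)
            (div_nonneg (by linarith) (by linarith))))
    _ = heightLip r ρ * dist x y := by rw [heightLip]; ring

lemma abs_le_div_ten (G : LipschitzGraph r ρ f) {x : ES n} (hx : ‖x‖ < r) : |f x| ≤ ρ / 10 := by
  have hr := G.radius_pos
  have := G.ten_mul_lt
  have h := G.abs_sub_le hx (norm_zero.trans_lt hr)
  rw [G.map_zero, sub_zero, dist_zero_right] at h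
  calc |f x| ≤ ρ / (10 * r) * r :=
        h.trans (mul_le_mul_of_nonneg_left hx.le (div_nonneg (by linarith) (by linarith)))
    _ = ρ / 10 := by field_simp

lemma abs_lastC_sub_height_le (G : LipschitzGraph r ρ f) (hx : ‖firstC x‖ < r) :
    |lastC x - height f x| ≤ ρ / 10 := by
  rw [height, sub_sub_cancel]
  exact G.abs_le_div_ten hx

lemma lastC_le_of_height_le (G : LipschitzGraph r ρ f) (hx : ‖firstC x‖ < r)
    (hxr : height f x ≤ r) : lastC x ≤ ρ / 5 := by
  linarith [(abs_le.1 (G.abs_lastC_sub_height_le hx)).2, G.ten_mul_lt]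

lemma mem_Ucyl_of_height_le (G : LipschitzGraph r ρ f) (hx : ‖firstC x‖ < r)
    (hx0 : 0 < height f x) (hxr : height f x ≤ r) : x ∈ Ucyl f r ρ :=
  mem_Ucyl_iff.2 ⟨hx, hx0, by
    linarith [G.lastC_le_of_height_le hx hxr, G.radius_pos, G.ten_mul_lt]⟩

lemma refPoint_mem_Ucyl (G : LipschitzGraph r ρ f) : refPoint n ρ ∈ Ucyl f r ρ := by
  have := G.radius_pos
  have := G.ten_mul_lt
  refine mem_Ucyl_iff.2 ⟨?_, ?_, ?_⟩
  · rwa [firstC_single_last, norm_zero]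
  · rw [height, firstC_single_last, G.map_zero, lastC_single_last]
    linarith
  · rw [lastC_single_last]
    linarith

lemma continuousOn_height (G : LipschitzGraph r ρ f) :
    ContinuousOn (height f) {x | ‖firstC x‖ < r} :=
  continuous_lastC.continuousOn.sub
    (G.lipschitzOnWith.continuousOn.comp continuous_firstC.continuousOn
      fun _ hx => mem_ball_zero_iff.2 hx)

lemma isOpen_Ucyl (G : LipschitzGraph r ρ f) : IsOpen (Ucyl f r ρ) := by
  have h := (G.continuousOn_height.isOpen_inter_preimage (isOpen_norm_firstC_lt r)
    (isOpen_Ioi (a := 0))).inter ((isOpen_Iio (a := ρ)).preimage continuous_lastC)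
  convert h using 1
  ext x
  exact mem_Ucyl_iff.trans and_assoc.symm

lemma ball_subset_Ucyl (G : LipschitzGraph r ρ f) (hfirst : ‖firstC x‖ + t ≤ r)
    (hlast : lastC x + t ≤ ρ) (hheight : heightLip r ρ * t ≤ height f x) :
    ball x t ⊆ Ucyl f r ρ := by
  intro y hy
  have hyx : dist y x < t := hy
  have ht : 0 < t := dist_nonneg.trans_lt hyx
  have hyr : ‖firstC y‖ < r := by linarith [norm_firstC_le_add_dist y x]
  refine mem_Ucyl_iff.2 ⟨hyr, ?_, ?_⟩
  · have hΛ : heightLip r ρ * dist y x < heightLip r ρ * t :=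
      mul_lt_mul_of_pos_left hyx (by linarith [G.two_lt_heightLip])
    linarith [(abs_le.1 (G.abs_height_sub_le hyr (y := x) (by linarith))).1]
  · linarith [(abs_le.1 (dist_lastC_le y x)).2]

lemma mem_graphBdry_of_height_eq_zero (G : LipschitzGraph r ρ f) (hz : ‖firstC z‖ < r)
    (hz0 : height f z = 0) : z ∈ graphBdry f r ρ := by
  have hρ : 0 < ρ := by linarith [G.radius_pos, G.ten_mul_lt]
  refine ⟨⟨Metric.mem_closure_iff.2 fun ε hε => ?_, fun hint => ?_⟩, hz, sub_eq_zero.1 hz0⟩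
  · refine ⟨raise z (min (ε / 2) (ρ / 2)), mem_Ucyl_iff.2 ⟨?_, ?_, ?_⟩, ?_⟩
    · rwa [firstC_raise]
    · rw [height_raise, hz0]
      positivity
    · rw [lastC_raise]
      linarith [(abs_le.1 (G.abs_lastC_sub_height_le hz)).2, min_le_right (ε / 2) (ρ / 2)]
    · rw [dist_comm, dist_raise, abs_of_pos (by positivity)]
      linarith [min_le_left (ε / 2) (ρ / 2)]
  · exact notMem_Ucyl_of_height_nonpos hz0.le (interior_subset hint)

lemma continuousOn_indicator (G : LipschitzGraph r ρ f) {v : ES (n + 1) → ℝ}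
    (hv : ContinuousOn v (Ucyl f r ρ))
    (hbdry : ∀ z ∈ graphBdry f r ρ, Tendsto v (𝓝[Ucyl f r ρ] z) (𝓝 0)) :
    ContinuousOn ((Ucyl f r ρ).indicator v) {x | ‖firstC x‖ < r ∧ lastC x < ρ} := by
  refine fun z hz => ContinuousAt.continuousWithinAt ?_
  have hheight : ContinuousAt (height f) z :=
    G.continuousOn_height.continuousAt ((isOpen_norm_firstC_lt r).mem_nhds hz.1)
  rcases lt_trichotomy (height f z) 0 with hneg | hzero | hpos
  · refine continuousAt_const.congr (f := fun _ => 0) ?_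
    filter_upwards [hheight.eventually_lt continuousAt_const hneg] with y hy
    exact (indicator_of_notMem (notMem_Ucyl_of_height_nonpos hy.le) v).symm
  · have hlim := hbdry z (G.mem_graphBdry_of_height_eq_zero hz.1 hzero)
    classical
    rw [ContinuousAt, indicator_of_notMem (notMem_Ucyl_of_height_nonpos hzero.le),
      ← piecewise_eq_indicator]
    exact hlim.piecewise tendsto_const_nhds
  · have hU : Ucyl f r ρ ∈ 𝓝 z := G.isOpen_Ucyl.mem_nhds (mem_Ucyl_iff.2 ⟨hz.1, hpos, hz.2⟩)
    refine (hv.continuousAt hU).congr ?_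
    filter_upwards [hU] with y hy using (indicator_of_mem hy v).symm

lemma isCompact_height_le (G : LipschitzGraph r ρ f) {R h : ℝ} (hR : R < r) :
    IsCompact {z : ES (n + 1) | ‖firstC z‖ ≤ R ∧ 0 ≤ height f z ∧ height f z ≤ h} := by
  refine Metric.isCompact_of_isClosed_isBounded ?_ ?_
  · exact (G.continuousOn_height.mono fun z hz => hz.trans_lt hR).preimage_isClosed_of_isClosed
      (isClosed_le continuous_firstC.norm continuous_const) (isClosed_Icc (a := 0) (b := h))
  · refine isBounded_iff_forall_norm_le.2 ⟨R + (h + ρ / 10), fun z hz => ?_⟩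
    have habs := abs_le.1 (G.abs_lastC_sub_height_le (hz.1.trans_lt hR))
    exact (norm_le_norm_firstC_add z).trans (add_le_add hz.1
      (abs_le.2 ⟨by linarith [hz.2.1, hz.2.2], by linarith [hz.2.2]⟩))

end LipschitzGraph

/-! ### Harnack chains -/

section Chains

variable {n : ℕ} {f : ES n → ℝ} {r ρ δ t C : ℝ} {v : ES (n + 1) → ℝ} {x p : ES (n + 1)}

lemma firstC_eq_of_mem_segment_raise (hp : p ∈ segment ℝ x (raise x t)) :
    firstC p = firstC x := by
  simpa only [firstC_raise, segment_same, mem_singleton_iff] using firstC_mem_segment hp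

lemma height_eq_add_of_firstC_eq (h : firstC p = firstC x) :
    height f p = height f x + (lastC p - lastC x) := by
  rw [height, height, h]
  ring

/-- The part of `U` at height at least `δ`, and at definite distance from the rest of the boundary,
in which Harnack chains to the reference point are run. -/
def chainRegion (f : ES n → ℝ) (r ρ δ : ℝ) : Set (ES (n + 1)) :=
  {x | ‖firstC x‖ ≤ 7 / 8 * r ∧ δ ≤ height f x ∧ lastC x ≤ 3 / 4 * ρ}

/-- The step length of the Harnack chains in `chainRegion f r ρ δ`. -/
def chainRadius (r ρ δ : ℝ) : ℝ := δ / (16 * heightLip r ρ)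

/-- The number of steps of a Harnack chain of total length at most `ρ`. -/
def chainLength (r ρ δ : ℝ) : ℕ := ⌈ρ / (chainRadius r ρ δ / 2)⌉₊

/-- The constant comparing values in `chainRegion f r ρ δ` with the value at the reference point.
The square accounts for a vertical and a horizontal chain. -/
def chainConst (r ρ δ C : ℝ) : ℝ := (C ^ chainLength r ρ δ) ^ 2

lemma one_le_chainConst (hC : 1 ≤ C) : 1 ≤ chainConst r ρ δ C :=
  one_le_pow₀ (one_le_pow₀ hC)

namespace LipschitzGraph

lemma chainRadius_pos (G : LipschitzGraph r ρ f) (hδ : 0 < δ) : 0 < chainRadius r ρ δ :=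
  div_pos hδ (by linarith [G.two_lt_heightLip])

lemma ball_chainRadius_subset (G : LipschitzGraph r ρ f) (hδ : 0 < δ) (hδr : δ ≤ r)
    (hx : x ∈ chainRegion f r ρ δ) : ball x (2 * chainRadius r ρ δ) ⊆ Ucyl f r ρ := by
  have hΛ := G.two_lt_heightLip
  have hradius : heightLip r ρ * (2 * chainRadius r ρ δ) = δ / 8 := by
    rw [chainRadius]
    field_simp
    norm_num
  have hsmall : 2 * (2 * chainRadius r ρ δ) ≤ δ / 8 :=
    (mul_le_mul_of_nonneg_right hΛ.le (by linarith [G.chainRadius_pos hδ])).trans_eq hradius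
  obtain ⟨hfirst, hheight, hlast⟩ := hx
  have := G.ten_mul_lt
  exact G.ball_subset_Ucyl (by linarith) (by linarith) (by linarith)

lemma abs_refPoint_sub_lastC_le (G : LipschitzGraph r ρ f) (hδ : 0 < δ)
    (hx : x ∈ chainRegion f r ρ δ) : |ρ / 2 - lastC x| ≤ ρ := by
  obtain ⟨hfirst, hheight, hlast⟩ := hx
  have := G.radius_pos
  have := G.ten_mul_lt
  have := (abs_le.1 (G.abs_lastC_sub_height_le (x := x) (by linarith))).1
  exact abs_le.2 ⟨by linarith, by linarith⟩

lemma segment_raise_subset_chainRegion (G : LipschitzGraph r ρ f) (hδr : δ ≤ r)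
    (hx : x ∈ chainRegion f r ρ δ) :
    segment ℝ x (raise x (ρ / 2 - lastC x)) ⊆ chainRegion f r ρ δ := by
  intro p hp
  obtain ⟨hfirst, hheight, hlast⟩ := hx
  have hpx := firstC_eq_of_mem_segment_raise hp
  have hplast := lastC_mem_uIcc hp
  rw [lastC_raise, add_sub_cancel, mem_uIcc] at hplast
  have := G.radius_pos
  have := G.ten_mul_lt
  have := (abs_le.1 (G.abs_lastC_sub_height_le (x := x) (by linarith))).2
  refine ⟨hpx ▸ hfirst, ?_, ?_⟩
  · rw [height_eq_add_of_firstC_eq hpx]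
    rcases hplast with h | h <;> linarith
  · rcases hplast with h | h <;> linarith

lemma segment_refPoint_subset_chainRegion (G : LipschitzGraph r ρ f) (hδr : δ ≤ r)
    (hfirst : ‖firstC x‖ ≤ 7 / 8 * r) (hlast : lastC x = ρ / 2) :
    segment ℝ x (refPoint n ρ) ⊆ chainRegion f r ρ δ := by
  intro p hp
  have := G.radius_pos
  have := G.ten_mul_lt
  have hpfirst : ‖firstC p‖ ≤ 7 / 8 * r := by
    rw [← mem_closedBall_zero_iff]
    refine (convex_closedBall 0 _).segment_subset (mem_closedBall_zero_iff.2 hfirst) ?_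
      (firstC_mem_segment hp)
    rw [firstC_single_last]
    exact mem_closedBall_self (by linarith)
  have hplast : lastC p = ρ / 2 := by
    simpa only [hlast, lastC_single_last, uIcc_self, mem_singleton_iff] using lastC_mem_uIcc hp
  have := (abs_le.1 (G.abs_lastC_sub_height_le (x := p) (by linarith))).2
  exact ⟨hpfirst, by linarith, by linarith⟩

end LipschitzGraph

namespace HarnackOn

lemma le_pow_chainLength_mul (hv : HarnackOn (Ucyl f r ρ) C v) (G : LipschitzGraph r ρ f)
    (hC : 0 ≤ C) (hδ : 0 < δ) (hδr : δ ≤ r) {y : ES (n + 1)}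
    (hseg : segment ℝ x y ⊆ chainRegion f r ρ δ) (hxy : dist x y ≤ ρ) :
    v y ≤ C ^ chainLength r ρ δ * v x :=
  hv.le_pow_mul_of_segment hC (G.chainRadius_pos hδ) _
    (fun _ hp => G.ball_chainRadius_subset hδ hδr (hseg hp))
    (hxy.trans ((div_le_iff₀ (half_pos (G.chainRadius_pos hδ))).1 (Nat.le_ceil _)))

theorem comparable_refPoint (hv : HarnackOn (Ucyl f r ρ) C v) (G : LipschitzGraph r ρ f)
    (hC : 0 ≤ C) (hδ : 0 < δ) (hδr : δ ≤ r) (hx : x ∈ chainRegion f r ρ δ) :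
    v x ≤ chainConst r ρ δ C * v (refPoint n ρ) ∧
      v (refPoint n ρ) ≤ chainConst r ρ δ C * v x := by
  set y := raise x (ρ / 2 - lastC x) with hy
  have hylast : lastC y = ρ / 2 := by rw [hy, lastC_raise, add_sub_cancel]
  have hxy : segment ℝ x y ⊆ chainRegion f r ρ δ := G.segment_raise_subset_chainRegion hδr hx
  have hyA : segment ℝ y (refPoint n ρ) ⊆ chainRegion f r ρ δ :=
    G.segment_refPoint_subset_chainRegion hδr (by rw [hy, firstC_raise]; exact hx.1) hylast
  have dxy : dist y x ≤ ρ := by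
    rw [hy, dist_raise]
    exact G.abs_refPoint_sub_lastC_le hδ hx
  have dyA : dist y (refPoint n ρ) ≤ ρ := by
    rw [dist_eq_norm]
    refine (norm_le_norm_firstC_add _).trans ?_
    rw [isLinearMap_firstC.map_sub, isLinearMap_lastC.map_sub, firstC_single_last,
      lastC_single_last, hylast, sub_self, abs_zero, sub_zero, hy, firstC_raise]
    linarith [hx.1, G.radius_pos, G.ten_mul_lt]
  have hchain := fun {x y} => hv.le_pow_chainLength_mul G hC hδ hδr (x := x) (y := y)
  have hCm : 0 ≤ C ^ chainLength r ρ δ := pow_nonneg hC _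
  rw [chainConst, sq, mul_assoc, mul_assoc]
  exact ⟨(hchain (segment_symm ℝ x y ▸ hxy) dxy).trans (mul_le_mul_of_nonneg_left
      (hchain (segment_symm ℝ y _ ▸ hyA) (dist_comm y _ ▸ dyA)) hCm),
    (hchain hyA dyA).trans (mul_le_mul_of_nonneg_left (hchain hxy (dist_comm y x ▸ dxy)) hCm)⟩

lemma le_pow_mul_raise_height (hv : HarnackOn (Ucyl f r ρ) C v) (G : LipschitzGraph r ρ f)
    (hC : 0 ≤ C) (hx : ‖firstC x‖ ≤ 7 / 8 * r) (hx0 : 0 < height f x)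
    (hxr : height f x ≤ r / 8) :
    v x ≤ C ^ ⌈4 * heightLip r ρ⌉₊ * v (raise x (height f x)) := by
  have hΛ := G.two_lt_heightLip
  have := G.ten_mul_lt
  set T := height f x / (2 * heightLip r ρ) with hT
  have hT0 : 0 < T := by positivity
  have hΛT : heightLip r ρ * (2 * T) = height f x := by
    rw [hT]
    field_simp
  have hTx : 2 * (2 * T) ≤ height f x :=
    (mul_le_mul_of_nonneg_right hΛ.le (by positivity)).trans_eq hΛT
  refine hv.le_pow_mul_of_segment hC hT0 _ (fun p hp => ?_) ?_
  · rw [segment_symm] at hp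
    have hpx := firstC_eq_of_mem_segment_raise hp
    have hplast := lastC_mem_uIcc hp
    rw [lastC_raise, uIcc_of_le (by linarith)] at hplast
    have hxlast : lastC x ≤ ρ / 5 := G.lastC_le_of_height_le (by linarith) (by linarith)
    refine G.ball_subset_Ucyl (by rw [hpx]; linarith) (by linarith [hplast.2]) ?_
    rw [hΛT, height_eq_add_of_firstC_eq hpx]
    linarith [hplast.1]
  · calc dist (raise x (height f x)) x = 4 * heightLip r ρ * (T / 2) := by
          rw [dist_raise, abs_of_pos hx0, ← hΛT]
          ring
      _ ≤ _ := by gcongr; exact Nat.le_ceil _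

lemma mul_height_pow_le_of_le_height (hv : HarnackOn (Ucyl f r ρ) C v)
    (G : LipschitzGraph r ρ f) (hC : 0 ≤ C) (hA : 0 ≤ v (refPoint n ρ)) (γ : ℕ)
    (hx : ‖firstC x‖ ≤ 7 / 8 * r) (hx0 : r / 8 ≤ height f x) (hxr : height f x ≤ r / 4) :
    v x * height f x ^ γ ≤ chainConst r ρ (r / 8) C * r ^ γ * v (refPoint n ρ) := by
  have hr := G.radius_pos
  have hlast := G.lastC_le_of_height_le (x := x) (by linarith) (by linarith)
  have hchain := (hv.comparable_refPoint G hC (by linarith) (by linarith)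
    ⟨hx, hx0, by linarith [G.ten_mul_lt]⟩).1
  rw [mul_right_comm]
  exact mul_le_mul hchain (pow_le_pow_left₀ (by linarith) (by linarith) γ)
    (pow_nonneg (by linarith) γ) (mul_nonneg (by rw [chainConst]; positivity) hA)

/-- Doubling the height costs a factor `2 ^ γ`, whence growth at most of order `γ` near the
graph. -/
theorem mul_height_pow_le (hv : HarnackOn (Ucyl f r ρ) C v) (G : LipschitzGraph r ρ f)
    (hC : 0 ≤ C) (hpos : ∀ z ∈ Ucyl f r ρ, 0 < v z) {γ : ℕ}
    (hγ : C ^ ⌈4 * heightLip r ρ⌉₊ ≤ 2 ^ γ) (hx : ‖firstC x‖ ≤ 7 / 8 * r)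
    (hx0 : 0 < height f x) (hxr : height f x ≤ r / 4) :
    v x * height f x ^ γ ≤ chainConst r ρ (r / 8) C * r ^ γ * v (refPoint n ρ) := by
  have := G.radius_pos
  obtain ⟨k, hk⟩ := pow_unbounded_of_one_lt (r / 8 / height f x) one_lt_two
  rw [div_lt_iff₀ hx0] at hk
  induction k generalizing x with
  | zero =>
    exact hv.mul_height_pow_le_of_le_height G hC (hpos _ G.refPoint_mem_Ucyl).le γ hx
      (by linarith) hxr
  | succ k ih =>
    rcases le_or_gt (r / 8) (height f x) with hhigh | hlow
    · exact hv.mul_height_pow_le_of_le_height G hC (hpos _ G.refPoint_mem_Ucyl).le γ hx hhigh hxr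
    set y := raise x (height f x) with hy
    have hyfirst : ‖firstC y‖ ≤ 7 / 8 * r := by rwa [hy, firstC_raise]
    have hyheight : height f y = 2 * height f x := by rw [hy, height_raise, two_mul]
    have hvy : 0 < v y := hpos y (G.mem_Ucyl_of_height_le (by linarith) (by linarith)
      (by linarith))
    calc v x * height f x ^ γ ≤ C ^ ⌈4 * heightLip r ρ⌉₊ * v y * height f x ^ γ := by
          gcongr
          exact hv.le_pow_mul_raise_height G hC hx hx0 hlow.le
      _ ≤ 2 ^ γ * v y * height f x ^ γ := by gcongr
      _ = v y * height f y ^ γ := by rw [hyheight, mul_pow]; ring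
      _ ≤ _ := ih hyfirst (by linarith) (by linarith)
          (by rwa [hyheight, ← mul_assoc, ← pow_succ])

end HarnackOn

end Chains

/-! ### The Carleson estimate -/

lemma WeakLapGE.congr {N : ℕ} {D : Set (ES N)} {c : ℝ} {g h : ES N → ℝ} (hh : WeakLapGE D c h)
    (hgh : EqOn g h D) : WeakLapGE D c g := fun φ hφ hφ0 => by
  refine (hh φ hφ hφ0).trans_eq (integral_congr_ae (Eventually.of_forall fun z => ?_))
  by_cases hz : z ∈ tsupport φ
  · simp only [hgh (hφ.2.2 hz)]
  · simp only [lap_eq_zero_of_notMem_tsupport hz, mul_zero]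

/-- A weakly subharmonic function in `U` which vanishes on the graph part of the boundary. -/
structure VanishingSubharmonic {n : ℕ} (f : ES n → ℝ) (r ρ : ℝ) (q : ES (n + 1) → ℝ) : Prop where
  continuousOn : ContinuousOn q (Ucyl f r ρ)
  tendsto_zero : ∀ z ∈ graphBdry f r ρ, Tendsto q (𝓝[Ucyl f r ρ] z) (𝓝 0)
  weakLapGE : WeakLapGE (Ucyl f r ρ) 0 q

/-- A positive function as in `VanishingSubharmonic` which satisfies a Harnack inequality with
constant `C`. Both `u` and `v` are of this kind. -/
structure PositiveSubharmonic {n : ℕ} (f : ES n → ℝ) (r ρ C : ℝ) (v : ES (n + 1) → ℝ) : Prop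
    extends VanishingSubharmonic f r ρ v where
  pos : ∀ x ∈ Ucyl f r ρ, 0 < v x
  harnackOn : HarnackOn (Ucyl f r ρ) C v

/-- The factor by which a subharmonic function decreases on approaching the graph on which it
vanishes. -/
def boundaryDecay (n : ℕ) (r ρ : ℝ) : ℝ := decayFactor (n + 1) (1 / heightLip r ρ)

section Carleson

variable {n : ℕ} {f : ES n → ℝ} {r ρ C η S : ℝ} {q v : ES (n + 1) → ℝ} {x y z : ES (n + 1)}

lemma inv_heightLip_mem_Ioo (hr : 0 < r) (hρ : 10 * r < ρ) : 1 / heightLip r ρ ∈ Ioo 0 1 := by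
  have := two_lt_heightLip hr hρ
  exact ⟨by positivity, (div_lt_one (by linarith)).2 (by linarith)⟩

lemma boundaryDecay_mem_Ioo (hr : 0 < r) (hρ : 10 * r < ρ) : boundaryDecay n r ρ ∈ Ioo 0 1 :=
  have h := inv_heightLip_mem_Ioo hr hρ
  decayFactor_mem_Ioo n.succ_pos h.1 h.2

lemma LipschitzGraph.height_add_le (G : LipschitzGraph r ρ f) (hx : ‖firstC x‖ < r)
    (hz : ‖firstC z‖ < r) (hd : dist z (raise x (-(height f x + η))) ≤ S) :
    height f z + η ≤ heightLip r ρ * S := by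
  have h := (abs_le.1 (G.abs_height_sub_le hz (y := raise x (-(height f x + η)))
    (by rwa [firstC_raise]))).2
  have := mul_le_mul_of_nonneg_left hd (by linarith [G.two_lt_heightLip] : 0 ≤ heightLip r ρ)
  rw [height_raise] at h
  linarith

/-- The point at depth `η` below `x` is the center of the exterior ball of `le_decayFactor_mul`. -/
lemma LipschitzGraph.le_boundaryDecay_mul (G : LipschitzGraph r ρ f) {g : ES (n + 1) → ℝ}
    (hgc : ContinuousOn g {z | ‖firstC z‖ < r ∧ lastC z < ρ})
    (hg0 : ∀ z, height f z ≤ 0 → g z = 0)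
    (hsub : ∀ z ∈ Ucyl f r ρ, 0 < g z → ∃ ε > 0, WeakLapGE (ball z ε) 0 g)
    (hS : 0 ≤ S) (hgS : ∀ z, dist (firstC z) (firstC x) ≤ 4 * η → 0 < height f z →
      height f z ≤ 4 * heightLip r ρ * η → g z ≤ S)
    (hη : 0 < η) (hηr : 4 * heightLip r ρ * η ≤ r) (hx : ‖firstC x‖ + 4 * η < r)
    (hx0 : 0 < height f x) (hxη : height f x ≤ η) : g x ≤ boundaryDecay n r ρ * S := by
  have hκ := inv_heightLip_mem_Ioo G.radius_pos G.ten_mul_lt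
  have hΛ := G.two_lt_heightLip
  set b := raise x (-(height f x + η)) with hb
  have hclose : ∀ z ∈ closedBall b (4 * η), dist (firstC z) (firstC x) ≤ 4 * η := fun z hz => by
    simpa only [hb, firstC_raise] using (dist_firstC_le z b).trans hz
  have hfirst : ∀ z ∈ closedBall b (4 * η), ‖firstC z‖ < r := fun z hz => by
    have := norm_firstC_le_add_dist z b
    rw [hb, firstC_raise] at this
    linarith [mem_closedBall.1 hz]
  have hheight : ∀ z ∈ closedBall b (4 * η), height f z ≤ 4 * heightLip r ρ * η := fun z hz => by
    linarith [G.height_add_le (by linarith) (hfirst z hz) (mem_closedBall.1 hz)]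
  have hlast : ∀ z ∈ closedBall b (4 * η), lastC z < ρ := fun z hz => by
    linarith [G.lastC_le_of_height_le (hfirst z hz) ((hheight z hz).trans hηr), G.ten_mul_lt,
      G.radius_pos]
  refine le_decayFactor_mul n.succ_pos hκ.1 hκ.2 hη hS
    (hgc.mono fun z hz => ⟨hfirst z hz, hlast z hz⟩) (fun z hz => hg0 z ?_) (fun z hz => ?_)
    (fun z hz hgz => ?_) (b := b) ?_
  · have hz4 : z ∈ closedBall b (4 * η) :=
      closedBall_subset_closedBall (by nlinarith [hκ.2]) hz
    have hΛη : heightLip r ρ * (1 / heightLip r ρ * η) = η := by field_simp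
    linarith [G.height_add_le (by linarith) (hfirst z hz4) (mem_closedBall.1 hz)]
  · rcases le_or_gt (height f z) 0 with h | h
    · exact (hg0 z h).trans_le hS
    · exact hgS z (hclose z hz) h (hheight z hz)
  · have hz' := ball_subset_closedBall hz
    exact hsub z (mem_Ucyl_iff.2 ⟨hfirst z hz', not_le.1 fun h => hgz.ne' (hg0 z h),
      hlast z hz'⟩) hgz
  · rw [dist_comm, hb, dist_raise, abs_neg, abs_of_pos (by linarith)]
    linarith

namespace VanishingSubharmonic

lemma exists_weakLapGE_max (hq : VanishingSubharmonic f r ρ q) (G : LipschitzGraph r ρ f)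
    (hz : z ∈ Ucyl f r ρ) (hqz : 0 < q z) :
    ∃ ε > 0, WeakLapGE (ball z ε) 0 fun y => max ((Ucyl f r ρ).indicator q y) 0 := by
  have hU := G.isOpen_Ucyl.mem_nhds hz
  have hqpos : ∀ᶠ y in 𝓝 z, 0 < q y :=
    (hq.continuousOn.continuousAt hU).eventually (lt_mem_nhds hqz)
  obtain ⟨ε, hε, hball⟩ := Metric.eventually_nhds_iff_ball.1 (hqpos.and hU)
  have hballU : ball z ε ⊆ Ucyl f r ρ := fun y hy => (hball y hy).2
  refine ⟨ε, hε, (hq.weakLapGE.mono hballU).congr fun y hy => ?_⟩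
  rw [indicator_of_mem (hballU hy), max_eq_left (hball y hy).1.le]

theorem le_boundaryDecay_mul (hq : VanishingSubharmonic f r ρ q) (G : LipschitzGraph r ρ f)
    (hS : 0 ≤ S) (hqS : ∀ z, dist (firstC z) (firstC x) ≤ 4 * η → 0 < height f z →
      height f z ≤ 4 * heightLip r ρ * η → q z ≤ S)
    (hη : 0 < η) (hηr : 4 * heightLip r ρ * η ≤ r) (hx : ‖firstC x‖ + 4 * η < r)
    (hx0 : 0 < height f x) (hxη : height f x ≤ η) : q x ≤ boundaryDecay n r ρ * S := by
  have hΛ := G.two_lt_heightLip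
  have hind : ∀ z ∈ Ucyl f r ρ, (Ucyl f r ρ).indicator q z = q z := fun z hz =>
    indicator_of_mem hz q
  have hxU : x ∈ Ucyl f r ρ := G.mem_Ucyl_of_height_le (by linarith) hx0 (by nlinarith)
  rw [← hind x hxU]
  refine (le_max_left _ 0).trans (G.le_boundaryDecay_mul
    (g := fun y => max ((Ucyl f r ρ).indicator q y) 0)
    ((G.continuousOn_indicator hq.continuousOn hq.tendsto_zero).sup continuousOn_const)
    (fun z hz => ?_) (fun z hz hqz => ?_) hS (fun z hzx hz0 hzη => ?_) hη hηr hx hx0 hxη)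
  · rw [indicator_of_notMem (notMem_Ucyl_of_height_nonpos hz), max_self]
  · rw [hind z hz] at hqz
    exact hq.exists_weakLapGE_max G hz (by simpa using hqz)
  · have hzr : ‖firstC z‖ < r := by
      linarith [norm_le_norm_add_dist (firstC z) (firstC x)]
    rw [hind z (G.mem_Ucyl_of_height_le hzr hz0 (hzη.trans hηr))]
    exact max_le (hqS z hzx hz0 hzη) hS

end VanishingSubharmonic

lemma exists_pos_boundaryDecay_lt_pow (n : ℕ) (hr : 0 < r) (hρ : 10 * r < ρ) (γ : ℕ) :
    ∃ ε > 0, 16 * heightLip r ρ * ε ≤ 1 ∧ boundaryDecay n r ρ < (1 - 4 * ε) ^ γ := by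
  have hlin : Continuous fun ε : ℝ => 16 * heightLip r ρ * ε := by fun_prop
  have hpow : Continuous fun ε : ℝ => (1 - 4 * ε) ^ γ := by fun_prop
  have hev : ∀ᶠ ε in 𝓝 (0 : ℝ),
      16 * heightLip r ρ * ε < 1 ∧ boundaryDecay n r ρ < (1 - 4 * ε) ^ γ :=
    (hlin.continuousAt.eventually (gt_mem_nhds (by simp))).and
      (hpow.continuousAt.eventually (lt_mem_nhds (by simpa using (boundaryDecay_mem_Ioo hr hρ).2)))
  obtain ⟨ε, hε, hε0⟩ := ((hev.filter_mono nhdsWithin_le_nhds).and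
    (self_mem_nhdsWithin (s := Ioi 0))).exists
  exact ⟨ε, hε0, hε.1.le, hε.2⟩

namespace PositiveSubharmonic

/-- Otherwise `v` would be at most `v x / (1 - 4 * ε) ^ γ` around `x`, contradicting the decay of
`v` towards the graph. -/
lemma mul_le_height_of_isMax (hv : PositiveSubharmonic f r ρ C v) (G : LipschitzGraph r ρ f)
    {γ : ℕ} {ε : ℝ} (hε : 0 < ε) (hεΛ : 16 * heightLip r ρ * ε ≤ 1)
    (hεγ : boundaryDecay n r ρ < (1 - 4 * ε) ^ γ) (hx0 : 0 < height f x)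
    (hxr : height f x ≤ r / 4)
    (hmax : ∀ z, ‖firstC z‖ ≤ 7 / 8 * r → 0 < height f z → height f z ≤ r / 4 →
      v z * (7 / 8 * r - ‖firstC z‖) ^ γ ≤ v x * (7 / 8 * r - ‖firstC x‖) ^ γ) :
    ε * (7 / 8 * r - ‖firstC x‖) ≤ height f x := by
  by_contra! hlow
  have hΛ := G.two_lt_heightLip
  set d := 7 / 8 * r - ‖firstC x‖ with hd
  set η := height f x
  have hd0 : 0 < d := pos_of_mul_pos_right (hx0.trans hlow) hε.le
  have hdr : d ≤ 7 / 8 * r := by linarith [norm_nonneg (firstC x)]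
  have hε32 : ε ≤ 1 / 32 := by nlinarith
  have hΛη : 4 * heightLip r ρ * η ≤ r / 4 := by nlinarith
  have hηd : 4 * η ≤ d / 8 := by nlinarith
  have hpow : 0 < (1 - 4 * ε) ^ γ := pow_pos (by linarith) γ
  have hvx : 0 < v x := hv.pos x (G.mem_Ucyl_of_height_le (by linarith) hx0 (by linarith))
  have hle : ∀ z, dist (firstC z) (firstC x) ≤ 4 * η → 0 < height f z →
      height f z ≤ 4 * heightLip r ρ * η → v z ≤ v x / (1 - 4 * ε) ^ γ := fun z hzx hz0 hzη => by
    have hz : ‖firstC z‖ ≤ ‖firstC x‖ + 4 * η := by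
      linarith [norm_le_norm_add_dist (firstC z) (firstC x)]
    have hvz : 0 < v z := hv.pos z (G.mem_Ucyl_of_height_le (by linarith) hz0 (by linarith))
    rw [le_div_iff₀ hpow]
    refine le_of_mul_le_mul_right ?_ (pow_pos hd0 γ)
    calc v z * (1 - 4 * ε) ^ γ * d ^ γ = v z * ((1 - 4 * ε) * d) ^ γ := by
          rw [mul_assoc, mul_pow]
      _ ≤ v z * (7 / 8 * r - ‖firstC z‖) ^ γ := by
          gcongr
          · exact mul_nonneg (by linarith) hd0.le
          · linarith
      _ ≤ v x * d ^ γ := hmax z (by linarith) hz0 (by linarith)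
  have hdecay := hv.le_boundaryDecay_mul G (div_nonneg hvx.le hpow.le) hle hx0
    (by linarith) (by linarith) hx0 le_rfl
  rw [mul_div_assoc', le_div_iff₀ hpow, mul_comm] at hdecay
  exact (le_of_mul_le_mul_right hdecay hvx).not_gt hεγ

lemma mul_pow_le (hv : PositiveSubharmonic f r ρ C v) (G : LipschitzGraph r ρ f) (hC : 0 ≤ C)
    {γ : ℕ} (hγ : C ^ ⌈4 * heightLip r ρ⌉₊ ≤ 2 ^ γ) {ε : ℝ} (hε : 0 < ε)
    (hεΛ : 16 * heightLip r ρ * ε ≤ 1) (hεγ : boundaryDecay n r ρ < (1 - 4 * ε) ^ γ)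
    (hx : ‖firstC x‖ ≤ 7 / 8 * r) (hx0 : 0 < height f x) (hxr : height f x ≤ r / 4) :
    v x * (7 / 8 * r - ‖firstC x‖) ^ γ ≤
      chainConst r ρ (r / 8) C * r ^ γ * v (refPoint n ρ) / ε ^ γ := by
  have := G.radius_pos
  have hinner : ∀ {z : ES (n + 1)}, ‖firstC z‖ ≤ 7 / 8 * r → ‖firstC z‖ < r := fun hz => by linarith
  have hind : ∀ {z : ES (n + 1)}, ‖firstC z‖ ≤ 7 / 8 * r → 0 < height f z → height f z ≤ r / 4 →
      (Ucyl f r ρ).indicator v z = v z := fun hz hz0 hzr =>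
    indicator_of_mem (G.mem_Ucyl_of_height_le (hinner hz) hz0 (by linarith)) v
  have hcont : ContinuousOn
      (fun z => (Ucyl f r ρ).indicator v z * (7 / 8 * r - ‖firstC z‖) ^ γ)
      {z | ‖firstC z‖ ≤ 7 / 8 * r ∧ 0 ≤ height f z ∧ height f z ≤ r / 4} :=
    ((G.continuousOn_indicator hv.continuousOn hv.tendsto_zero).mono fun z hz =>
      ⟨hinner hz.1, by linarith [hz.2.2, G.ten_mul_lt,
        (abs_le.1 (G.abs_lastC_sub_height_le (hinner hz.1))).2]⟩).mul
      ((continuous_const.sub continuous_firstC.norm).pow γ).continuousOn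
  obtain ⟨y, ⟨hy, hy0, hyr⟩, hmax⟩ :=
    (G.isCompact_height_le (by linarith)).exists_isMaxOn ⟨x, hx, hx0.le, hxr⟩ hcont
  have hxy := hmax ⟨hx, hx0.le, hxr⟩
  simp only [mem_ofPred_eq, hind hx hx0 hxr] at hxy
  refine hxy.trans ?_
  rcases hy0.eq_or_lt with hzero | hy0
  · rw [indicator_of_notMem (notMem_Ucyl_of_height_nonpos hzero.ge), zero_mul]
    have := (hv.pos _ G.refPoint_mem_Ucyl).le
    have : 0 ≤ chainConst r ρ (r / 8) C := sq_nonneg _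
    positivity
  rw [hind hy hy0 hyr, le_div_iff₀ (by positivity), mul_assoc, ← mul_pow]
  have hfar := hv.mul_le_height_of_isMax G hε hεΛ hεγ hy0 hyr fun z hz hz0 hzr => by
    have hzy := hmax ⟨hz, hz0.le, hzr⟩
    simpa only [mem_ofPred_eq, hind hz hz0 hzr, hind hy hy0 hyr] using hzy
  have hvy := (hv.pos y (G.mem_Ucyl_of_height_le (hinner hy) hy0 (by linarith))).le
  rw [mul_comm] at hfar
  exact (mul_le_mul_of_nonneg_left (pow_le_pow_left₀ (mul_nonneg (by linarith) hε.le) hfar γ)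
    hvy).trans (hv.harnackOn.mul_height_pow_le G hC hv.pos hγ hy hy0 hyr)

end PositiveSubharmonic

theorem exists_le_mul_refPoint (n : ℕ) (hr : 0 < r) (hρ : 10 * r < ρ) (hC : 1 ≤ C) :
    ∃ D, 1 ≤ D ∧ ∀ {f : ES n → ℝ} {v}, LipschitzGraph r ρ f → PositiveSubharmonic f r ρ C v →
      ∀ {x}, ‖firstC x‖ ≤ 3 / 4 * r → 0 < height f x → height f x ≤ r / 4 →
        v x ≤ D * v (refPoint n ρ) := by
  obtain ⟨γ, hγ⟩ := pow_unbounded_of_one_lt (C ^ ⌈4 * heightLip r ρ⌉₊) (one_lt_two (α := ℝ))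
  obtain ⟨ε, hε, hεΛ, hεγ⟩ := exists_pos_boundaryDecay_lt_pow n hr hρ γ
  refine ⟨max 1 (chainConst r ρ (r / 8) C * r ^ γ / ε ^ γ / (r / 8) ^ γ), le_max_left _ _,
    fun {f v} G hv {x} hx hx0 hxr => ?_⟩
  have hvA := hv.pos _ G.refPoint_mem_Ucyl
  have hvx := hv.pos x (G.mem_Ucyl_of_height_le (by linarith) hx0 (by linarith))
  have hweighted : v x * (r / 8) ^ γ ≤
      chainConst r ρ (r / 8) C * r ^ γ * v (refPoint n ρ) / ε ^ γ := by
    refine le_trans ?_ (hv.mul_pow_le G (by linarith) hγ.le hε hεΛ hεγ (by linarith) hx0 hxr)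
    gcongr
    linarith
  calc v x ≤ chainConst r ρ (r / 8) C * r ^ γ * v (refPoint n ρ) / ε ^ γ / (r / 8) ^ γ :=
        (le_div_iff₀ (by positivity)).2 hweighted
    _ = chainConst r ρ (r / 8) C * r ^ γ / ε ^ γ / (r / 8) ^ γ * v (refPoint n ρ) := by ring
    _ ≤ _ := mul_le_mul_of_nonneg_right (le_max_right _ _) hvA.le

end Carleson

/-! ### Nonpositivity from two-level bounds -/

section KernelShare

variable {N : ℕ} {q : ES N → ℝ} {x y : ES N} {R t s B c : ℝ}

/-- A lower bound for the share of the averaging kernel of radius `t` which is carried by a ball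
of radius `τ * t`. -/
def kernelShare (N : ℕ) (τ : ℝ) : ℝ :=
  bumpProfile (9 / 16) * τ ^ N * volume.real (ball (0 : ES N) 1) / kernelMass N

lemma kernelShare_pos (N : ℕ) {τ : ℝ} (hτ : 0 < τ) : 0 < kernelShare N τ := by
  have hvol : 0 < volume.real (ball (0 : ES N) 1) :=
    ENNReal.toReal_pos (measure_ball_pos _ _ one_pos).ne' measure_ball_lt_top.ne
  have hprofile : 0 < bumpProfile (9 / 16) := bumpProfile_pos (by norm_num)
  have hmass := kernelMass_pos N
  rw [kernelShare]
  positivity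

lemma WeakLapGE.integral_const_sub_mul_lap_nonpos {D : Set (ES N)} {φ : ES N → ℝ} (hD : IsOpen D)
    (hqc : ContinuousOn q D) (hq : WeakLapGE D 0 q) (B : ℝ) (hφ : IsTestFun D φ)
    (hφ0 : ∀ z, 0 ≤ φ z) : ∫ z, (B - q z) * lap φ z ≤ 0 := by
  have hconst : WeakLapGE D 0 fun _ => -B :=
    weakLapGE_of_le_lap contDiff_const fun _ _ => by simp [lap]
  have h := hq.add hD hqc continuousOn_const hconst φ hφ hφ0
  have hneg : ∫ z, (B - q z) * lap φ z = -∫ z, (q z + -B) * lap φ z := by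
    rw [← integral_neg]
    congr with z
    ring
  rw [hneg]
  linarith

/-- Apply the super-mean value inequality to `B - q`. -/
theorem WeakLapGE.le_sub_mul_kernelShare (hq : WeakLapGE (ball x R) 0 q)
    (hqc : ContinuousOn q (ball x R)) (ht : 0 < t) (htR : t < R) (hs : 0 < s)
    (hball : ball y s ⊆ ball x (3 / 4 * t)) (hB : ∀ z ∈ ball x R, q z ≤ B) (hc : 0 ≤ c)
    (hqy : ∀ z ∈ ball y s, q z ≤ B - c) : q x ≤ B - c * kernelShare N (s / t) := by
  have hWc : ContinuousOn (fun z => B - q z) (ball x R) := continuousOn_const.sub hqc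
  have hW0 : ∀ z ∈ ball x R, 0 ≤ B - q z := fun z hz => sub_nonneg.2 (hB z hz)
  have hupper : weightedMean (fun z => B - q z) x t ≤ (B - q x) * kernelMass N := by
    simpa only [zero_mul, zero_div, Real.exp_zero, one_mul] using
      weightedMean_le_exp_mul (l := 0) hWc ht htR le_rfl hW0 fun φ hφ hφ0 => by
        rw [zero_mul]
        exact hq.integral_const_sub_mul_lap_nonpos isOpen_ball hqc B hφ hφ0
  have hlower := volume_ball_mul_le_weightedMean hWc ht htR hs
    (fun z hz => hW0 z (ball_subset_ball htR.le hz)) hball hc fun z hz => le_sub_comm.1 (hqy z hz)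
  have hshare : c * (bumpProfile (9 / 16) * (t ^ N)⁻¹ *
      (s ^ N * volume.real (ball (0 : ES N) 1))) = c * kernelShare N (s / t) * kernelMass N := by
    have := (kernelMass_pos N).ne'
    rw [kernelShare, div_pow]
    field_simp
  rw [hshare] at hlower
  linarith [le_of_mul_le_mul_right (hlower.trans hupper) (kernelMass_pos N)]

end KernelShare

section TwoLevel

variable {n : ℕ} {f : ES n → ℝ} {r ρ δ s t B M T : ℝ} {q : ES (n + 1) → ℝ} {z₀ : ES n}
  {x z : ES (n + 1)}

/-- The box of size `s` standing on the graph of `f` above the point `z₀`. -/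
def graphBox (f : ES n → ℝ) (z₀ : ES n) (s : ℝ) : Set (ES (n + 1)) :=
  {x | dist (firstC x) z₀ < s ∧ 0 < height f x ∧ height f x ≤ s}

/-- The bounds propagated from scale to scale: on the box of size `s` the function `q` is at most
`B`, and above the relative height `δ` it is even at most `-(M * B)`. -/
structure TwoLevelBound (f : ES n → ℝ) (q : ES (n + 1) → ℝ) (z₀ : ES n) (δ s B M : ℝ) : Prop where
  le : ∀ x ∈ graphBox f z₀ s, q x ≤ B
  le_neg : ∀ x ∈ graphBox f z₀ s, δ * s ≤ height f x → q x ≤ -(M * B)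

/-- The ratio of the sizes of consecutive boxes. -/
def shrinkRatio (r ρ : ℝ) : ℝ := 1 - 1 / (16 * heightLip r ρ)

/-- Levels `δ` and `M` for which two-level bounds propagate: `M` outweighs the share of the
kernel lying above the height `δ * s`, and the layer below that height is so thin that there is
room for `m` decay steps between two consecutive boxes. -/
structure AdmissibleLevels (n : ℕ) (r ρ δ M : ℝ) : Prop where
  delta_pos : 0 < δ
  one_le : 1 ≤ M
  two_le_mul_kernelShare : 2 ≤ M * kernelShare (n + 1) (1 / (4 * heightLip r ρ))
  exists_pow_le : ∃ m : ℕ, boundaryDecay n r ρ ^ m ≤ M⁻¹ ∧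
    8 * heightLip r ρ * (m + 1) * δ ≤ 1 - shrinkRatio r ρ

lemma LipschitzGraph.shrinkRatio_mem_Ico (G : LipschitzGraph r ρ f) :
    shrinkRatio r ρ ∈ Ico (31 / 32) 1 := by
  have hΛ := G.two_lt_heightLip
  have h : 1 / (16 * heightLip r ρ) ≤ 1 / 32 := by gcongr; linarith
  have h0 : 0 < 1 / (16 * heightLip r ρ) := by positivity
  exact ⟨by rw [shrinkRatio]; linarith, by rw [shrinkRatio]; linarith⟩

namespace AdmissibleLevels

lemma pos (hlev : AdmissibleLevels n r ρ δ M) : 0 < M := one_pos.trans_le hlev.one_le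

lemma mul_delta_le (hlev : AdmissibleLevels n r ρ δ M) (G : LipschitzGraph r ρ f) :
    8 * heightLip r ρ * δ ≤ 1 - shrinkRatio r ρ := by
  obtain ⟨m, -, hm⟩ := hlev.exists_pow_le
  have hΛ := G.two_lt_heightLip
  have hδ := hlev.delta_pos
  have : 0 ≤ heightLip r ρ * m * δ := by positivity
  linarith

lemma delta_le (hlev : AdmissibleLevels n r ρ δ M) (G : LipschitzGraph r ρ f) : δ ≤ 1 / 32 := by
  have := mul_lt_mul_of_pos_right G.two_lt_heightLip hlev.delta_pos
  linarith [hlev.mul_delta_le G, G.shrinkRatio_mem_Ico.1, hlev.delta_pos]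

end AdmissibleLevels

theorem exists_admissibleLevels (n : ℕ) (hr : 0 < r) (hρ : 10 * r < ρ) :
    ∃ δ M, AdmissibleLevels n r ρ δ M := by
  have hΛ := two_lt_heightLip hr hρ
  have hshare := kernelShare_pos (n + 1) (τ := 1 / (4 * heightLip r ρ)) (by positivity)
  set M := max 1 (2 / kernelShare (n + 1) (1 / (4 * heightLip r ρ)))
  have hM : 1 ≤ M := le_max_left _ _
  obtain ⟨m, hm⟩ := exists_pow_lt_of_lt_one (inv_pos.2 (one_pos.trans_le hM))
    (boundaryDecay_mem_Ioo (n := n) hr hρ).2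
  have hratio : 0 < 1 - shrinkRatio r ρ := by
    rw [shrinkRatio, sub_sub_cancel]
    positivity
  exact ⟨(1 - shrinkRatio r ρ) / (8 * heightLip r ρ * (m + 1)), M, by positivity, hM,
    (div_le_iff₀ hshare).1 (le_max_right _ _), m, hm.le,
    (mul_div_cancel₀ _ (by positivity)).le⟩

lemma graphBox_mono {s' : ℝ} (hs : s' ≤ s) : graphBox f z₀ s' ⊆ graphBox f z₀ s :=
  fun _ hx => ⟨hx.1.trans_le hs, hx.2.1, hx.2.2.trans hs⟩

lemma LipschitzGraph.graphBox_subset_Ucyl (G : LipschitzGraph r ρ f) (hsr : ‖z₀‖ + s ≤ r) :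
    graphBox f z₀ s ⊆ Ucyl f r ρ := fun x hx =>
  G.mem_Ucyl_of_height_le (by linarith [hx.1, norm_le_norm_add_dist (firstC x) z₀]) hx.2.1
    (by linarith [hx.2.2, norm_nonneg z₀])

lemma LipschitzGraph.ball_subset_graphBox (G : LipschitzGraph r ρ f) (hsr : ‖z₀‖ + s ≤ r)
    (hx : dist (firstC x) z₀ + T ≤ s) (hlow : heightLip r ρ * T ≤ height f x)
    (hup : height f x + heightLip r ρ * T ≤ s) : ball x T ⊆ graphBox f z₀ s := by
  intro y hy
  have hyx : dist y x < T := hy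
  have hfirst : ∀ p : ES (n + 1), dist (firstC p) z₀ < s → ‖firstC p‖ < r := fun p hp => by
    linarith [norm_le_norm_add_dist (firstC p) z₀]
  have hys : dist (firstC y) z₀ < s := by
    linarith [dist_triangle (firstC y) (firstC x) z₀, dist_firstC_le y x]
  have hheight := abs_le.1 (G.abs_height_sub_le (hfirst y hys)
    (hfirst x (by linarith [dist_nonneg.trans_lt hyx])))
  have hΛ : heightLip r ρ * dist y x < heightLip r ρ * T :=
    mul_lt_mul_of_pos_left hyx (by linarith [G.two_lt_heightLip])
  exact ⟨hys, by linarith, by linarith⟩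

lemma LipschitzGraph.ball_raise_subset_ball (G : LipschitzGraph r ρ f) (ht : 0 < t) :
    ball (raise x (t / 2)) (t / (4 * heightLip r ρ)) ⊆ ball x (3 / 4 * t) := by
  have hΛ := G.two_lt_heightLip
  have : t / (4 * heightLip r ρ) ≤ t / 4 := by gcongr; linarith
  refine ball_subset_ball' ?_
  rw [dist_raise, abs_of_pos (by positivity)]
  linarith

lemma LipschitzGraph.add_le_height_of_mem_ball_raise (G : LipschitzGraph r ρ f)
    (hx : ‖firstC x‖ < r) (hz : ‖firstC z‖ < r)
    (hzx : z ∈ ball (raise x (t / 2)) (t / (4 * heightLip r ρ))) :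
    height f x + t / 4 ≤ height f z := by
  have hΛ := G.two_lt_heightLip
  have hheight := (abs_le.1 (G.abs_height_sub_le hz (y := raise x (t / 2))
    (by rwa [firstC_raise]))).1
  have hdist : heightLip r ρ * dist z (raise x (t / 2)) ≤ t / 4 :=
    calc heightLip r ρ * dist z (raise x (t / 2))
        ≤ heightLip r ρ * (t / (4 * heightLip r ρ)) := by gcongr; exact (mem_ball.1 hzx).le
      _ = t / 4 := by field_simp
  rw [height_raise] at hheight
  linarith

namespace TwoLevelBound

/-- If the height `δ * s` is only slightly above `x`, a fixed share of a small ball around `x`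
lies above it, where `q` is very negative. -/
lemma le_neg_of_ball_subset (h : TwoLevelBound f q z₀ δ s B M) (hq : VanishingSubharmonic f r ρ q)
    (G : LipschitzGraph r ρ f) (hM : 2 ≤ M * kernelShare (n + 1) (1 / (4 * heightLip r ρ)))
    (hB : 0 ≤ B) (hsr : ‖z₀‖ + s ≤ r) (ht : 0 < t) (hbox : ball x (2 * t) ⊆ graphBox f z₀ s)
    (hheight : δ * s ≤ height f x + t / 4) : q x ≤ -B := by
  have hΛ := G.two_lt_heightLip
  have hU := hbox.trans (G.graphBox_subset_Ucyl hsr)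
  have hsub := G.ball_raise_subset_ball (x := x) ht
  have hshare := kernelShare_pos (n + 1) (τ := 1 / (4 * heightLip r ρ)) (by positivity)
  have hM0 : 0 < M := pos_of_mul_pos_left (two_pos.trans_le hM) hshare.le
  have hmean := (hq.weakLapGE.mono hU).le_sub_mul_kernelShare (hq.continuousOn.mono hU) ht
    (by linarith) (by positivity) hsub (fun z hz => h.le z (hbox hz)) (c := (M + 1) * B)
    (by positivity) fun z hz => by
      have hz2 := ball_subset_ball (by linarith : 3 / 4 * t ≤ 2 * t) (hsub hz)
      have hup := G.add_le_height_of_mem_ball_raise (hU (mem_ball_self (by positivity))).1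
        (hU hz2).1 hz
      linarith [h.le_neg z (hbox hz2) (hheight.trans hup)]
  rw [div_right_comm, div_self ht.ne'] at hmean
  linarith [mul_le_mul_of_nonneg_left hM hB, mul_nonneg hB hshare.le]

lemma le_neg_of_le_height (h : TwoLevelBound f q z₀ δ s B M) (hq : VanishingSubharmonic f r ρ q)
    (G : LipschitzGraph r ρ f) (hδ : 0 < δ) (hδ8 : δ ≤ 1 / 8)
    (hM : 2 ≤ M * kernelShare (n + 1) (1 / (4 * heightLip r ρ))) (hB : 0 ≤ B) (hs : 0 < s)
    (hsr : ‖z₀‖ + s ≤ r) (hx : dist (firstC x) z₀ ≤ shrinkRatio r ρ * s)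
    (hlow : δ * (shrinkRatio r ρ * s) ≤ height f x) (hup : height f x ≤ δ * s) : q x ≤ -B := by
  have hΛ := G.two_lt_heightLip
  set t := δ * s / (4 * heightLip r ρ) with ht
  have ht0 : 0 < t := by positivity
  have htΛ : 4 * heightLip r ρ * t = δ * s := by rw [ht]; field_simp
  have hδs : δ * s ≤ s / 8 := by linarith [mul_le_mul_of_nonneg_right hδ8 hs.le]
  have hmargin : δ * (shrinkRatio r ρ * s) = δ * s - t / 4 := by
    rw [shrinkRatio, ht]
    field_simp
    ring
  have hroom : shrinkRatio r ρ * s + 2 * t ≤ s :=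
    calc shrinkRatio r ρ * s + 2 * t
        = s - (s - 8 * (δ * s)) / (16 * heightLip r ρ) := by
          rw [shrinkRatio, ht]
          field_simp
          ring
      _ ≤ s := sub_le_self _ (div_nonneg (by linarith) (by positivity))
  have htδ : 8 * t ≤ δ * s := htΛ ▸ by gcongr; linarith
  exact h.le_neg_of_ball_subset hq G hM hB hsr ht0
    (G.ball_subset_graphBox hsr (by linarith) (by linarith) (by linarith)) (by linarith)

lemma le_pow_mul (h : TwoLevelBound f q z₀ δ s B M) (hq : VanishingSubharmonic f r ρ q)
    (G : LipschitzGraph r ρ f) (hδ : 0 < δ) (hδΛ : 8 * heightLip r ρ * δ ≤ 1) (hM : 0 ≤ M)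
    (hB : 0 ≤ B) (hs : 0 < s) (hsr : ‖z₀‖ + s ≤ r) (k : ℕ) (hx : x ∈ graphBox f z₀ s)
    (hk : dist (firstC x) z₀ + 4 * k * (δ * s) < s) : q x ≤ boundaryDecay n r ρ ^ k * B := by
  have hdecay := (boundaryDecay_mem_Ioo (n := n) G.radius_pos G.ten_mul_lt).1.le
  have hδs : 4 * heightLip r ρ * (δ * s) ≤ s / 2 := by nlinarith
  have := mul_pos hδ hs
  induction k generalizing x with
  | zero => simpa only [pow_zero, one_mul] using h.le x hx
  | succ k ih =>
    have hS : 0 ≤ boundaryDecay n r ρ ^ k * B := by positivity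
    rcases le_total (δ * s) (height f x) with hhigh | hlow
    · calc q x ≤ -(M * B) := h.le_neg x hx hhigh
        _ ≤ 0 := neg_nonpos.2 (by positivity)
        _ ≤ boundaryDecay n r ρ ^ (k + 1) * B := by positivity
    · rw [pow_succ', mul_assoc]
      push_cast at hk
      have hk0 : (0 : ℝ) ≤ 4 * k * (δ * s) := by positivity
      refine hq.le_boundaryDecay_mul G hS (fun z hzx hz0 hzη => ?_) (mul_pos hδ hs)
        (by linarith [norm_nonneg z₀]) (by linarith [norm_le_norm_add_dist (firstC x) z₀])
        hx.2.1 hlow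
      have hz := dist_triangle (firstC z) (firstC x) z₀
      exact ih ⟨by linarith, hz0, by linarith⟩ (by linarith)

theorem shrink (h : TwoLevelBound f q z₀ δ s B M) (hq : VanishingSubharmonic f r ρ q)
    (G : LipschitzGraph r ρ f) (hlev : AdmissibleLevels n r ρ δ M) (hB : 0 ≤ B) (hs : 0 < s)
    (hsr : ‖z₀‖ + s ≤ r) : TwoLevelBound f q z₀ δ (shrinkRatio r ρ * s) (M⁻¹ * B) M := by
  obtain ⟨m, hpow, hm⟩ := hlev.exists_pow_le
  have hΛ := G.two_lt_heightLip
  have hδ := hlev.delta_pos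
  have hM := hlev.pos
  have hratio := G.shrinkRatio_mem_Ico
  have hδΛ := hlev.mul_delta_le G
  have hbox := graphBox_mono (f := f) (z₀ := z₀) (mul_le_of_le_one_left hs.le hratio.2.le)
  refine ⟨fun x hx => ?_, fun x hx hxδ => ?_⟩
  · have hmδ : 4 * m * δ ≤ 1 - shrinkRatio r ρ := by
      nlinarith [mul_nonneg m.cast_nonneg hδ.le]
    have hms : 4 * m * (δ * s) ≤ (1 - shrinkRatio r ρ) * s := by
      rw [← mul_assoc]; gcongr
    exact (h.le_pow_mul hq G hδ (by linarith [hratio.1]) hM.le hB hs hsr m (hbox hx)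
      (by linarith [hx.1])).trans (mul_le_mul_of_nonneg_right hpow hB)
  · rw [mul_inv_cancel_left₀ hM.ne']
    have hδ8 : δ ≤ 1 / 8 := by linarith [hlev.delta_le G]
    rcases le_total (δ * s) (height f x) with hhigh | hlow
    · refine (h.le_neg x (hbox hx) hhigh).trans (neg_le_neg (le_mul_of_one_le_left hB hlev.one_le))
    · exact h.le_neg_of_le_height hq G hδ hδ8 hlev.two_le_mul_kernelShare hB hs hsr hx.1.le hxδ hlow

lemma shrink_pow (h : TwoLevelBound f q z₀ δ s B M) (hq : VanishingSubharmonic f r ρ q)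
    (G : LipschitzGraph r ρ f) (hlev : AdmissibleLevels n r ρ δ M) (hB : 0 ≤ B) (hs : 0 < s)
    (hsr : ‖z₀‖ + s ≤ r) (j : ℕ) :
    TwoLevelBound f q z₀ δ (shrinkRatio r ρ ^ j * s) (M⁻¹ ^ j * B) M := by
  have hratio := G.shrinkRatio_mem_Ico
  have hratio0 : 0 < shrinkRatio r ρ := by linarith [hratio.1]
  have hM := hlev.pos
  induction j with
  | zero => simpa only [pow_zero, one_mul] using h
  | succ j ih =>
    have hle : shrinkRatio r ρ ^ j * s ≤ s :=
      mul_le_of_le_one_left hs.le (pow_le_one₀ hratio0.le hratio.2.le)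
    rw [pow_succ', pow_succ', mul_assoc, mul_assoc]
    exact ih.shrink hq G hlev (by positivity) (by positivity) (by linarith)

theorem nonpos (h : TwoLevelBound f q (firstC x) δ s B M) (hq : VanishingSubharmonic f r ρ q)
    (G : LipschitzGraph r ρ f) (hlev : AdmissibleLevels n r ρ δ M) (hB : 0 ≤ B)
    (hsr : ‖firstC x‖ + s ≤ r) (hx0 : 0 < height f x) (hxs : height f x ≤ s) : q x ≤ 0 := by
  have hs := hx0.trans_le hxs
  have hratio := G.shrinkRatio_mem_Ico
  have hM := hlev.pos
  obtain ⟨j, hj, hj'⟩ := exists_nat_pow_near_of_lt_one (div_pos hx0 hs) ((div_le_one hs).2 hxs)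
    (by linarith [hratio.1]) hratio.2
  rw [lt_div_iff₀ hs, pow_succ', mul_assoc] at hj
  rw [div_le_iff₀ hs] at hj'
  have hsj := hx0.trans_le hj'
  have hlow : δ * (shrinkRatio r ρ ^ j * s) ≤ height f x :=
    (mul_le_mul_of_nonneg_right (by linarith [hratio.1, hlev.delta_le G]) hsj.le).trans hj.le
  calc q x ≤ -(M * (M⁻¹ ^ j * B)) :=
        (h.shrink_pow hq G hlev hB hs hsr j).le_neg x ⟨by rwa [dist_self], hx0, hj'⟩ hlow
    _ ≤ 0 := neg_nonpos.2 (by positivity)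

end TwoLevelBound

end TwoLevel

/-! ### The comparison -/

section Comparison

variable {n : ℕ} {f : ES n → ℝ} {r ρ C K δ α M a : ℝ} {q q' u v V : ES (n + 1) → ℝ}
  {z₀ : ES n} {x : ES (n + 1)}

namespace VanishingSubharmonic

lemma const_mul (hq : VanishingSubharmonic f r ρ q) (hα : 0 ≤ α) :
    VanishingSubharmonic f r ρ fun z => α * q z where
  continuousOn := continuousOn_const.mul hq.continuousOn
  tendsto_zero z hz := by simpa only [mul_zero] using (hq.tendsto_zero z hz).const_mul α
  weakLapGE := by simpa only [mul_zero] using hq.weakLapGE.const_mul hα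

lemma add (hq : VanishingSubharmonic f r ρ q) (hq' : VanishingSubharmonic f r ρ q')
    (G : LipschitzGraph r ρ f) : VanishingSubharmonic f r ρ fun z => q z + q' z where
  continuousOn := hq.continuousOn.add hq'.continuousOn
  tendsto_zero z hz := by
    simpa only [add_zero] using (hq.tendsto_zero z hz).add (hq'.tendsto_zero z hz)
  weakLapGE := by
    simpa only [add_zero] using
      hq.weakLapGE.add G.isOpen_Ucyl hq.continuousOn hq'.continuousOn hq'.weakLapGE

end VanishingSubharmonic

namespace PositiveSubharmonic

lemma pos_refPoint (hv : PositiveSubharmonic f r ρ C v) (G : LipschitzGraph r ρ f) :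
    0 < v (refPoint n ρ) := hv.pos _ G.refPoint_mem_Ucyl

lemma div_refPoint_le (hv : PositiveSubharmonic f r ρ C v) (G : LipschitzGraph r ρ f)
    (hC : 0 ≤ C) (hδ : 0 < δ) (hδr : δ ≤ r) (hx : x ∈ chainRegion f r ρ δ) :
    v x / v (refPoint n ρ) ≤ chainConst r ρ δ C :=
  (div_le_iff₀ (hv.pos_refPoint G)).2
    (hv.harnackOn.comparable_refPoint G hC hδ hδr hx).1

lemma one_le_mul_div_refPoint (hv : PositiveSubharmonic f r ρ C v) (G : LipschitzGraph r ρ f)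
    (hC : 0 ≤ C) (hδ : 0 < δ) (hδr : δ ≤ r) (hx : x ∈ chainRegion f r ρ δ) :
    1 ≤ chainConst r ρ δ C * (v x / v (refPoint n ρ)) := by
  rw [← mul_div_assoc, one_le_div (hv.pos_refPoint G)]
  exact (hv.harnackOn.comparable_refPoint G hC hδ hδr hx).2

end PositiveSubharmonic

lemma div_refPoint_le_of_mem_chainRegion (hu : PositiveSubharmonic f r ρ C u)
    (hv : PositiveSubharmonic f r ρ C v) (G : LipschitzGraph r ρ f) (hC : 1 ≤ C) (hδ : 0 < δ)
    (hδr : δ ≤ r) (hx : x ∈ chainRegion f r ρ δ) :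
    v x / v (refPoint n ρ) ≤ chainConst r ρ δ C ^ 2 * (u x / u (refPoint n ρ)) := by
  have hD : 0 ≤ chainConst r ρ δ C := zero_le_one.trans (one_le_chainConst hC)
  calc v x / v (refPoint n ρ) ≤ chainConst r ρ δ C * 1 := by
        rw [mul_one]; exact hv.div_refPoint_le G (by linarith) hδ hδr hx
    _ ≤ chainConst r ρ δ C * (chainConst r ρ δ C * (u x / u (refPoint n ρ))) := by
        gcongr
        exact hu.one_le_mul_div_refPoint G (by linarith) hδ hδr hx
    _ = _ := by ring

lemma LipschitzGraph.mem_chainRegion_of_mem_graphBox (G : LipschitzGraph r ρ f)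
    (hz₀ : ‖z₀‖ ≤ r / 2) (hx : x ∈ graphBox f z₀ (r / 4)) (hδ : δ ≤ height f x) :
    x ∈ chainRegion f r ρ δ := by
  have hr := G.radius_pos
  have hfirst : ‖firstC x‖ ≤ 3 / 4 * r := by linarith [norm_le_norm_add_dist (firstC x) z₀, hx.1]
  have hlast := G.lastC_le_of_height_le (by linarith) (by linarith [hx.2.2])
  exact ⟨by linarith, hδ, by linarith [G.ten_mul_lt]⟩

/-- The bound from above is the Carleson estimate for `v`, the one from below the Harnack
inequality for `u`. -/
lemma PositiveSubharmonic.twoLevelBound_add_neg (hu : PositiveSubharmonic f r ρ C u)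
    (hv : PositiveSubharmonic f r ρ C v) (G : LipschitzGraph r ρ f) (hC : 0 ≤ C)
    (hδ : 0 < δ) (hδ1 : δ ≤ 1) (hM : 0 ≤ M) (hK : 0 ≤ K) (hz₀ : ‖z₀‖ ≤ r / 2)
    (hvK : ∀ {y}, ‖firstC y‖ ≤ 3 / 4 * r → 0 < height f y → height f y ≤ r / 4 →
      v y ≤ K * v (refPoint n ρ)) :
    TwoLevelBound f (fun y => v y / v (refPoint n ρ) +
      -((1 + M) * K * chainConst r ρ (δ * (r / 4)) C * (u y / u (refPoint n ρ))))
      z₀ δ (r / 4) K M := by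
  have hr := G.radius_pos
  have hδr : δ * (r / 4) ≤ r := by nlinarith
  have hvy : ∀ y ∈ graphBox f z₀ (r / 4), v y / v (refPoint n ρ) ≤ K := fun y hy =>
    (div_le_iff₀ (hv.pos_refPoint G)).2 (hvK
      (by linarith [norm_le_norm_add_dist (firstC y) z₀, hy.1]) hy.2.1 hy.2.2)
  refine ⟨fun y hy => ?_, fun y hy hyδ => ?_⟩
  · have huy := hu.pos y (G.graphBox_subset_Ucyl (by linarith) hy)
    have huA := hu.pos_refPoint G
    have hchain : 0 ≤ chainConst r ρ (δ * (r / 4)) C := by rw [chainConst]; positivity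
    have hterm : 0 ≤ (1 + M) * K * chainConst r ρ (δ * (r / 4)) C *
        (u y / u (refPoint n ρ)) := by positivity
    linarith [hvy y hy]
  · have hone := hu.one_le_mul_div_refPoint G hC (by positivity) hδr
      (G.mem_chainRegion_of_mem_graphBox hz₀ hy hyδ)
    have hterm := le_mul_of_one_le_right (by positivity : 0 ≤ (1 + M) * K) hone
    linarith [hvy y hy]

lemma div_refPoint_le_of_height_le (hu : PositiveSubharmonic f r ρ C u)
    (hneg : VanishingSubharmonic f r ρ fun z => -u z) (hv : PositiveSubharmonic f r ρ C v)
    (G : LipschitzGraph r ρ f) (hC : 0 ≤ C) (hlev : AdmissibleLevels n r ρ δ M) (hK : 0 ≤ K)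
    (hvK : ∀ {y}, ‖firstC y‖ ≤ 3 / 4 * r → 0 < height f y → height f y ≤ r / 4 →
      v y ≤ K * v (refPoint n ρ))
    (hx : ‖firstC x‖ ≤ r / 2) (hx0 : 0 < height f x) (hxr : height f x ≤ r / 4) :
    v x / v (refPoint n ρ) ≤
      (1 + M) * K * chainConst r ρ (δ * (r / 4)) C * (u x / u (refPoint n ρ)) := by
  have hM := hlev.pos
  have huA := hu.pos_refPoint G
  have hchain : 0 ≤ chainConst r ρ (δ * (r / 4)) C := by rw [chainConst]; positivity
  have hbound := hu.twoLevelBound_add_neg hv G hC hlev.delta_pos (by linarith [hlev.delta_le G])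
    hM.le hK hx hvK
  have hvanish : VanishingSubharmonic f r ρ (fun y => v y / v (refPoint n ρ) +
      -((1 + M) * K * chainConst r ρ (δ * (r / 4)) C * (u y / u (refPoint n ρ)))) := by
    convert (hv.const_mul (inv_nonneg.2 (hv.pos_refPoint G).le)).add
      (hneg.const_mul (α := (1 + M) * K * chainConst r ρ (δ * (r / 4)) C / u (refPoint n ρ))
        (by positivity)) G using 2
    ring
  linarith [hbound.nonpos hvanish G hlev hK (by linarith) hx0 hxr]

theorem exists_div_refPoint_le (n : ℕ) (hr : 0 < r) (hρ : 10 * r < ρ) (hC : 1 ≤ C) :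
    ∃ c, 0 < c ∧ ∀ {f : ES n → ℝ} {u v}, LipschitzGraph r ρ f → PositiveSubharmonic f r ρ C u →
      VanishingSubharmonic f r ρ (fun z => -u z) → PositiveSubharmonic f r ρ C v →
      ∀ x ∈ Ucyl f r ρ ∩ Tcyl n r ρ (1 / 2),
        v x / v (refPoint n ρ) ≤ c * (u x / u (refPoint n ρ)) := by
  obtain ⟨δ, M, hlev⟩ := exists_admissibleLevels n hr hρ
  obtain ⟨K, hK, hcarleson⟩ := exists_le_mul_refPoint n hr hρ hC
  have hD := one_le_chainConst (r := r) (ρ := ρ) (δ := r / 4) hC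
  refine ⟨max (chainConst r ρ (r / 4) C ^ 2) ((1 + M) * K * chainConst r ρ (δ * (r / 4)) C),
    lt_max_of_lt_left (by positivity), fun {f u v} G hu hneg hv x ⟨hxU, hxT⟩ => ?_⟩
  have hux := (div_pos (hu.pos x hxU) (hu.pos_refPoint G)).le
  have hxr : ‖firstC x‖ < 1 / 2 * r := hxT.1
  rcases le_total (r / 4) (height f x) with hhigh | hlow
  · refine (div_refPoint_le_of_mem_chainRegion hu hv G hC (by positivity) (by linarith)
      ⟨by linarith, hhigh, by linarith [(abs_lt.1 hxT.2).2]⟩).trans ?_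
    gcongr
    exact le_max_left _ _
  · refine (div_refPoint_le_of_height_le hu hneg hv G (by linarith) hlev (by linarith)
      (hcarleson G hv) (by linarith) (mem_Ucyl_iff.1 hxU).2.1 hlow).trans ?_
    gcongr
    exact le_max_right _ _

namespace LVHarmonic

lemma positiveSubharmonic (hv : LVHarmonic (Ucyl f r ρ) V v) (hV : VClass (Ucyl f r ρ) a V)
    (hpos : ∀ x ∈ Ucyl f r ρ, 0 < v x)
    (hbdry : ∀ z ∈ graphBdry f r ρ, Tendsto v (𝓝[Ucyl f r ρ] z) (𝓝 0))
    (hharnack : HarnackOn (Ucyl f r ρ) C v) : PositiveSubharmonic f r ρ C v where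
  continuousOn := hv.1
  tendsto_zero := hbdry
  weakLapGE := hv.weakLapGE_zero (fun z hz => (hV.2 z hz).1) fun z hz => (hpos z hz).le
  pos := hpos
  harnackOn := hharnack

lemma vanishingSubharmonic_neg (hu : LVHarmonic (Ucyl f r ρ) (fun _ => 0) u)
    (hbdry : ∀ z ∈ graphBdry f r ρ, Tendsto u (𝓝[Ucyl f r ρ] z) (𝓝 0)) :
    VanishingSubharmonic f r ρ fun z => -u z where
  continuousOn := hu.1.neg
  tendsto_zero z hz := by simpa only [neg_zero] using (hbdry z hz).neg
  weakLapGE φ hφ _ := by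
    simp only [neg_mul, integral_neg, hu.integral_mul_lap hφ, zero_mul, integral_zero, neg_zero,
      le_refl]

end LVHarmonic

end Comparison

/-- Lemma `eBHI`. If `u` is positive harmonic in `U = U_f(r,ρ)`,
`v` is positive `(Δ-V)`-harmonic in `U`, `V ∈ 𝒱(U,a)`, and `u = v = 0` on `∂_#U`,
then `v(x)/v(A) ≤ c · u(x)/u(A)` on `U ∩ T(1/2)` for a constant `c = c(ρ/r, N, a)`,
where `A = (0,…,0,ρ/2)`. -/
theorem statement11 {n : ℕ} (hn : 1 ≤ n) (r ρ : ℝ) (hr : 0 < r) (hρ : 10 * r < ρ)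
    (a : ℝ) (ha : 0 < a) :
    ∃ c : ℝ, 0 < c ∧
      ∀ f : ES n → ℝ, f 0 = 0 →
        LipschitzOnWith (Real.toNNReal (ρ / (10 * r))) f (ball 0 r) →
        ∀ V : ES (n+1) → ℝ, VClass (Ucyl f r ρ) a V →
          ∀ u v : ES (n+1) → ℝ,
            LVHarmonic (Ucyl f r ρ) (fun _ => 0) u → (∀ x ∈ Ucyl f r ρ, 0 < u x) →
            (∀ z ∈ graphBdry f r ρ, Tendsto u (𝓝[Ucyl f r ρ] z) (𝓝 0)) →
            LVHarmonic (Ucyl f r ρ) V v → (∀ x ∈ Ucyl f r ρ, 0 < v x) →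
            (∀ z ∈ graphBdry f r ρ, Tendsto v (𝓝[Ucyl f r ρ] z) (𝓝 0)) →
            ∀ x ∈ Ucyl f r ρ ∩ Tcyl n r ρ (1/2),
              v x / v (EuclideanSpace.single (Fin.last n) (ρ / 2)) ≤
                c * (u x / u (EuclideanSpace.single (Fin.last n) (ρ / 2))) := by
  obtain ⟨C, hC, hharnack⟩ := exists_harnackOn (n + 1) a
  obtain ⟨c, hc, hcomparison⟩ := exists_div_refPoint_le n hr hρ hC
  refine ⟨c, hc, fun f hf0 hlip V hV u v hu hupos hubdry hv hvpos hvbdry => ?_⟩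
  have hV0 : VClass (Ucyl f r ρ) a fun _ => 0 :=
    ⟨measurable_const, fun _ _ => ⟨le_rfl, by simpa using ha.le⟩⟩
  have huharnack := hharnack nonempty_compl_Ucyl hV0 hu hupos
  have hvharnack := hharnack nonempty_compl_Ucyl hV hv hvpos
  exact hcomparison ⟨hr, hρ, hf0, hlip⟩ (hu.positiveSubharmonic hV0 hupos hubdry huharnack)
    (hu.vanishingSubharmonic_neg hubdry) (hv.positiveSubharmonic hV hvpos hvbdry hvharnack)

end Anc

end
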